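/- There exists an absolute constant C such that for every odd prime p and every A ⊆ F_p with |A| ≥ 2, one has N'(A) − |A|⁶/p ≤ C·|A|^{5/2}·(E⁺(A))^{1/2}·(E×(A))^{1/4}·log|A|, where N'(A) is the number of sextuples (a1,a2,a3,a1',a2',a3') ∈ A⁶ with a1·a2 + a3 = a1'·a2' + a3'. -/

import Mathlib

open Finset

/-- The additive energy: quadruples `(a₁,a₂,a₃,a₄) ∈ A⁴` with `a₁+a₂ = a₃+a₄`. -/
def addEnergy (p : ℕ) (A : Finset (ZMod p)) : ℕ :=
  (((A ×ˢ A) ×ˢ A ×ˢ A).filter fun x => x.1.1 + x.1.2 = x.2.1 + x.2.2).card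

/-- The multiplicative energy: quadruples `(a₁,a₂,a₃,a₄) ∈ A⁴` with `a₁·a₂ = a₃·a₄`. -/
def mulEnergy (p : ℕ) (A : Finset (ZMod p)) : ℕ :=
  (((A ×ˢ A) ×ˢ A ×ˢ A).filter fun x => x.1.1 * x.1.2 = x.2.1 * x.2.2).card

/-- `Nprime p A` is the number of sextuples `(a₁,a₂,a₃,a₁',a₂',a₃') ∈ A⁶`
with `a₁a₂ + a₃ = a₁'a₂' + a₃'`. -/
def Nprime (p : ℕ) (A : Finset (ZMod p)) : ℕ :=
  (((A ×ˢ A ×ˢ A) ×ˢ (A ×ˢ A ×ˢ A)).filter fun x =>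
    x.1.1 * x.1.2.1 + x.1.2.2 = x.2.1 * x.2.2.1 + x.2.2.2).card

/-!
For `0 ∉ B`, expand the number of solutions of `b₁ b₂ + a = b₁' b₂' + a'` according to the
difference `d = a - a'` and to the dyadic size `t` of the number of representations of `b₁ b₂` as a
product of two elements of `B`. Cauchy–Schwarz in `d` separates the additive energy of `A` from the
second moment of the deviation from the mean, for each level set `C` of the representation function.

If `|B|² |C|` is large compared with `p²`, this second moment is bounded by a variance computation.
Otherwise it is at most `t²` times the number of solutions of `b₁ b₂ + c = b₁' b₂' + c'`, that is,
of incidences between lines of `F³` parallel to the `yz`-plane and lines parallel to the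
`xz`-plane. These are bounded by the polynomial method: a surface of low degree through a random
sample of the first family contains every line of the second that meets many of them. Few of these
lie on a component whose sections `y = const` have isolated inflection points, and on a component
whose sections consist of inflection points two lines of the second family meet too many common
lines of the first.
-/

namespace EnergyIncidence

open MvPolynomial
open scoped Polynomial

lemma natDegree_aeval_le_totalDegree {σ R A : Type*} [CommSemiring R] [CommSemiring A] [Algebra R A]
    {v : σ → A[X]} (hv : ∀ i, (v i).natDegree ≤ 1) (f : MvPolynomial σ R) :
    (aeval v f).natDegree ≤ f.totalDegree := by
  rw [← aeval_map_algebraMap A, ← mul_one f.totalDegree]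
  exact aeval_natDegree_le _ (sup_mono (support_map_subset _ f)) v hv

section Elimination

variable {R : Type*} [CommRing R] {n : ℕ}

lemma totalDegree_det_le {σ ι : Type*} [Fintype ι] [DecidableEq ι]
    (A : Matrix ι ι (MvPolynomial σ R)) (D : ι → ℕ) (hA : ∀ i j, (A i j).totalDegree ≤ D j) :
    A.det.totalDegree ≤ ∑ j, D j := by
  rw [Matrix.det_apply]
  refine totalDegree_finsetSum_le fun σ _ ↦ (totalDegree_smul_le _ _).trans ?_
  exact (totalDegree_finsetProd _ _).trans (sum_le_sum fun i _ ↦ hA (σ i) i)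

lemma totalDegree_coeff_finSuccEquiv_le (f : MvPolynomial (Fin (n + 1)) R) (i : ℕ) :
    ((finSuccEquiv R n f).coeff i).totalDegree ≤ f.totalDegree := by
  by_cases h : (finSuccEquiv R n f).coeff i = 0
  · simp [h]
  · exact le_of_add_le_left (totalDegree_coeff_finSuccEquiv_add_le f i h)

lemma natDegree_finSuccEquiv_le (f : MvPolynomial (Fin (n + 1)) R) :
    (finSuccEquiv R n f).natDegree ≤ f.totalDegree :=
  (natDegree_finSuccEquiv f).trans_le (degreeOf_le_totalDegree _ _)

lemma totalDegree_resultant_finSuccEquiv_le (f g : MvPolynomial (Fin (n + 1)) R) :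
    ((finSuccEquiv R n f).resultant (finSuccEquiv R n g)).totalDegree ≤
      2 * f.totalDegree * g.totalDegree := by
  set F := finSuccEquiv R n f
  set G := finSuccEquiv R n g
  have entry_le (i j) : (F.sylvester G F.natDegree G.natDegree i j).totalDegree ≤
      Fin.addCases (fun _ ↦ g.totalDegree) (fun _ ↦ f.totalDegree) j := by
    simp only [Polynomial.sylvester, Matrix.of_apply]
    refine Fin.addCases (fun j ↦ ?_) (fun j ↦ ?_) j
    · simp only [Fin.addCases_left]
      split_ifs
      · exact totalDegree_coeff_finSuccEquiv_le g _
      · simp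
    · simp only [Fin.addCases_right]
      split_ifs
      · exact totalDegree_coeff_finSuccEquiv_le f _
      · simp
  calc (F.resultant G).totalDegree
      ≤ F.natDegree * g.totalDegree + G.natDegree * f.totalDegree := by
        simpa [Fin.sum_univ_add, Polynomial.resultant] using totalDegree_det_le _ _ entry_le
    _ ≤ f.totalDegree * g.totalDegree + g.totalDegree * f.totalDegree := by
        gcongr <;> exact natDegree_finSuccEquiv_le _
    _ = 2 * f.totalDegree * g.totalDegree := by ring

lemma exists_mul_add_mul_eq_zero_of_resultant_eq_zero [IsDomain R] {f g : R[X]}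
    (h : f.resultant g = 0) :
    ∃ u v : R[X], (u, v) ≠ 0 ∧ u.degree < f.natDegree ∧ f * v + g * u = 0 := by
  let b₁ := ((Polynomial.degreeLT.basis R f.natDegree).prod
    (Polynomial.degreeLT.basis R g.natDegree)).reindex finSumFinEquiv
  let b₂ := Polynomial.degreeLT.basis R (f.natDegree + g.natDegree)
  obtain ⟨v, hv, hv_mul⟩ := Matrix.exists_mulVec_eq_zero_iff.mpr h
  rw [← Polynomial.toMatrix_sylvesterMap' f g le_rfl le_rfl] at hv_mul
  set w := b₁.equivFun.symm v
  have hw : w ≠ 0 := (LinearEquiv.map_ne_zero_iff _).mpr hv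
  have hw_ker : Polynomial.sylvesterMap f g le_rfl le_rfl w = 0 := by
    have hrepr := LinearMap.toMatrix_mulVec_repr b₁ b₂
      (Polynomial.sylvesterMap f g le_rfl le_rfl) w
    rw [show (b₁.repr w : _ → R) = v from b₁.equivFun.apply_symm_apply v] at hrepr
    apply b₂.repr.injective
    ext i
    simpa using (congrFun (hrepr.symm.trans hv_mul) i)
  refine ⟨w.1, w.2, fun h0 ↦ hw ?_, Polynomial.mem_degreeLT.mp w.1.2, ?_⟩
  · exact Prod.ext (Subtype.ext (congrArg Prod.fst h0)) (Subtype.ext (congrArg Prod.snd h0))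
  · simpa using congrArg Subtype.val hw_ker

lemma resultant_ne_zero_of_prime_of_not_dvd [IsDomain R] {f g : R[X]} (hf : Prime f)
    (hg : ¬ f ∣ g) : f.resultant g ≠ 0 := by
  intro h
  obtain ⟨u, v, huv, hu_deg, h_eq⟩ := exists_mul_add_mul_eq_zero_of_resultant_eq_zero h
  have hu_dvd : f ∣ u :=
    (hf.dvd_or_dvd ⟨-v, by linear_combination h_eq⟩).resolve_left hg
  have hu : u = 0 := by
    refine Polynomial.eq_zero_of_dvd_of_degree_lt hu_dvd ?_
    rwa [Polynomial.degree_eq_natDegree hf.ne_zero]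
  have hv : v = 0 := by simpa [hu, hf.ne_zero] using h_eq
  exact huv (by simp [hu, hv])

lemma finSuccEquiv_symm_C (r : MvPolynomial (Fin n) R) :
    (finSuccEquiv R n).symm (Polynomial.C r) = rename Fin.succ r := by
  rw [AlgEquiv.symm_apply_eq]
  induction r using MvPolynomial.induction_on with
  | C a => simp [finSuccEquiv_apply]
  | add p q hp hq => simp [hp, hq]
  | mul_X p i hp => simp [hp, finSuccEquiv_X_succ]

lemma exists_rename_succ_eq_of_degreeOf_eq_zero {f : MvPolynomial (Fin (n + 1)) R}
    (hf : degreeOf 0 f = 0) :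
    ∃ c : MvPolynomial (Fin n) R, rename Fin.succ c = f ∧ c.totalDegree ≤ f.totalDegree := by
  rw [← natDegree_finSuccEquiv, Polynomial.natDegree_eq_zero] at hf
  obtain ⟨c, hc⟩ := hf
  refine ⟨c, ?_, ?_⟩
  · rw [← finSuccEquiv_symm_C, hc, AlgEquiv.symm_apply_apply]
  · simpa [← hc] using totalDegree_coeff_finSuccEquiv_le f 0

/- The eliminant is the resultant with respect to the variable `X 0`, except in the degenerate cases
where `f` does not involve that variable or `g` is a constant. -/
lemma exists_eliminant {K : Type*} [Field K] {f g : MvPolynomial (Fin (n + 1)) K} (hf : Prime f)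
    (hg : ¬ f ∣ g) :
    ∃ c : MvPolynomial (Fin n) K, c ≠ 0 ∧ c.totalDegree ≤ 2 * f.totalDegree * g.totalDegree ∧
      rename Fin.succ c ∈ Ideal.span {f, g} := by
  by_cases hdeg : degreeOf 0 f = 0
  · obtain ⟨c, rfl, hc⟩ := exists_rename_succ_eq_of_degreeOf_eq_zero hdeg
    rcases Nat.eq_zero_or_pos g.totalDegree with hg_deg | hg_deg
    · rw [totalDegree_eq_zero_iff_eq_C] at hg_deg
      have hg_ne : coeff 0 g ≠ 0 := fun h0 ↦ hg (by rw [hg_deg, h0]; simp)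
      refine ⟨C (coeff 0 g), by simpa using hg_ne, by simp, ?_⟩
      rw [rename_C, ← hg_deg]
      exact Ideal.subset_span (by simp)
    · refine ⟨c, fun h0 ↦ hf.ne_zero (by simp [h0]), by nlinarith, Ideal.subset_span (by simp)⟩
  · set F := finSuccEquiv K n f
    set G := finSuccEquiv K n g
    have hF : Prime F := (MulEquiv.prime_iff (finSuccEquiv K n).toMulEquiv).mpr hf
    have hFG : ¬ F ∣ G := fun h ↦ hg ((map_dvd_iff (finSuccEquiv K n)).mp h)
    refine ⟨F.resultant G, resultant_ne_zero_of_prime_of_not_dvd hF hFG,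
      totalDegree_resultant_finSuccEquiv_le f g, ?_⟩
    obtain ⟨u, v, -, -, huv⟩ := Polynomial.exists_mul_add_mul_eq_C_resultant F G le_rfl le_rfl
      (Or.inl (by rwa [natDegree_finSuccEquiv]))
    rw [← finSuccEquiv_symm_C, ← huv, Ideal.mem_span_pair]
    refine ⟨(finSuccEquiv K n).symm u, (finSuccEquiv K n).symm v, ?_⟩
    simp [F, G, mul_comm]

lemma map_eq_zero_of_mem_span_pair {A B : Type*} [CommRing A] [CommRing B] (φ : A →+* B)
    {f g c : A} (hc : c ∈ Ideal.span {f, g}) (hf : φ f = 0) (hg : φ g = 0) : φ c = 0 := by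
  obtain ⟨a, b, rfl⟩ := Ideal.mem_span_pair.mp hc
  simp [hf, hg]

end Elimination

section AxisLines

/-- A line in affine 3-space with coordinates `(z, x, y) = (X 0, X 1, X 2)` that is contained in
a plane perpendicular to a coordinate axis. The same data describe two lines: the *x-line*
`x = pos, z = slope * y + icpt` and the *y-line* `y = pos, z = slope * x + icpt`. -/
@[ext]
structure AxisLine (K : Type*) where
  /-- The value of the constant coordinate. -/
  pos : K
  /-- The slope of `z` along the line. -/
  slope : K
  /-- The value of `z` at the origin of the line. -/
  icpt : K

variable {K : Type*} [Field K]

namespace AxisLine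

/-- Restriction of a polynomial to the x-line of `l`, parametrized by `y`. -/
noncomputable def restrictX (l : AxisLine K) : MvPolynomial (Fin 3) K →ₐ[K] K[X] :=
  aeval ![Polynomial.C l.slope * Polynomial.X + Polynomial.C l.icpt, Polynomial.C l.pos,
    Polynomial.X]

/-- Restriction of a polynomial to the y-line of `m`, parametrized by `x`. -/
noncomputable def restrictY (m : AxisLine K) : MvPolynomial (Fin 3) K →ₐ[K] K[X] :=
  aeval ![Polynomial.C m.slope * Polynomial.X + Polynomial.C m.icpt, Polynomial.X,
    Polynomial.C m.pos]

/-- The x-line of `l` meets the y-line of `m`. -/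
def Meets (l m : AxisLine K) : Prop :=
  l.slope * m.pos + l.icpt = m.slope * l.pos + m.icpt

lemma natDegree_restrictX_le (l : AxisLine K) (f : MvPolynomial (Fin 3) K) :
    (l.restrictX f).natDegree ≤ f.totalDegree := by
  refine natDegree_aeval_le_totalDegree (fun i ↦ ?_) f
  fin_cases i
  exacts [Polynomial.natDegree_linear_le, by simp, Polynomial.natDegree_X_le]

lemma natDegree_restrictY_le (m : AxisLine K) (f : MvPolynomial (Fin 3) K) :
    (m.restrictY f).natDegree ≤ f.totalDegree := by
  refine natDegree_aeval_le_totalDegree (fun i ↦ ?_) f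
  fin_cases i
  exacts [Polynomial.natDegree_linear_le, Polynomial.natDegree_X_le, by simp]

lemma eval_restrictX (l : AxisLine K) (f : MvPolynomial (Fin 3) K) (y : K) :
    (l.restrictX f).eval y = eval ![l.slope * y + l.icpt, l.pos, y] f := by
  induction f using MvPolynomial.induction_on with
  | C a => simp [restrictX]
  | add p q hp hq => simp [hp, hq]
  | mul_X p i hp => fin_cases i <;> simp [restrictX, ← hp]

lemma eval_restrictY (m : AxisLine K) (f : MvPolynomial (Fin 3) K) (x : K) :
    (m.restrictY f).eval x = eval ![m.slope * x + m.icpt, x, m.pos] f := by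
  induction f using MvPolynomial.induction_on with
  | C a => simp [restrictY]
  | add p q hp hq => simp [hp, hq]
  | mul_X p i hp => fin_cases i <;> simp [restrictY, ← hp]

lemma Meets.eval_restrictX_eq_eval_restrictY {l m : AxisLine K} (h : l.Meets m)
    (f : MvPolynomial (Fin 3) K) : (l.restrictX f).eval m.pos = (m.restrictY f).eval l.pos := by
  rw [eval_restrictX, eval_restrictY, h]

lemma restrictY_rename_succ (m : AxisLine K) (c : MvPolynomial (Fin 2) K) :
    m.restrictY (rename Fin.succ c) = aeval ![Polynomial.X, Polynomial.C m.pos] c := by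
  rw [restrictY, aeval_rename]
  rfl

end AxisLine

open AxisLine

lemma card_le_natDegree_of_forall_eval_eq_zero {A ι : Type*} [CommRing A] [IsDomain A] {q : A[X]}
    (hq : q ≠ 0) {S : Finset ι} {x : ι → A} (hx : Set.InjOn x S)
    (hS : ∀ i ∈ S, q.eval (x i) = 0) : #S ≤ q.natDegree := by
  classical
  rw [← card_image_of_injOn hx]
  refine Polynomial.card_le_degree_of_subset_roots fun y hy ↦ ?_
  obtain ⟨i, hi, rfl⟩ := mem_image.mp hy
  exact (Polynomial.mem_roots hq).mpr (hS i hi)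

lemma card_le_totalDegree_of_meets {g : MvPolynomial (Fin 3) K} {m : AxisLine K}
    (hg : m.restrictY g ≠ 0) {S : Finset (AxisLine K)} (hS : Set.InjOn pos (S : Set (AxisLine K)))
    (h : ∀ l ∈ S, l.restrictX g = 0 ∧ l.Meets m) : #S ≤ g.totalDegree := by
  refine (card_le_natDegree_of_forall_eval_eq_zero hg hS fun l hl ↦ ?_).trans
    (m.natDegree_restrictY_le g)
  rw [← (h l hl).2.eval_restrictX_eq_eval_restrictY, (h l hl).1, Polynomial.eval_zero]

lemma natDegree_equivMvPolynomial_symm_le (c : MvPolynomial (Fin 2) K) :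
    ((Polynomial.Bivariate.equivMvPolynomial K).symm c).natDegree ≤ c.totalDegree :=
  natDegree_aeval_le_totalDegree (by intro i; fin_cases i <;> simp) c

lemma eval_C_equivMvPolynomial_symm (c : MvPolynomial (Fin 2) K) (b : K) :
    ((Polynomial.Bivariate.equivMvPolynomial K).symm c).eval (Polynomial.C b) =
      aeval ![Polynomial.X, Polynomial.C b] c := by
  induction c using MvPolynomial.induction_on with
  | C a => simp
  | add p q hp hq => simp [hp, hq]
  | mul_X p i hp => fin_cases i <;> simp [← hp]

lemma card_le_totalDegree_of_restrictY_rename_succ {c : MvPolynomial (Fin 2) K} (hc : c ≠ 0)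
    {S : Finset (AxisLine K)} (hS : Set.InjOn pos (S : Set (AxisLine K)))
    (h : ∀ m ∈ S, m.restrictY (rename Fin.succ c) = 0) : #S ≤ c.totalDegree := by
  have hc' : (Polynomial.Bivariate.equivMvPolynomial K).symm c ≠ 0 := by simpa using hc
  refine (card_le_natDegree_of_forall_eval_eq_zero hc'
    (Polynomial.C_injective.comp_injOn hS) fun m hm ↦ ?_).trans
    (natDegree_equivMvPolynomial_symm_le c)
  rw [Function.comp_apply, eval_C_equivMvPolynomial_symm, ← restrictY_rename_succ, h m hm]

lemma card_le_of_restrictY_eq_zero_of_not_dvd {f g : MvPolynomial (Fin 3) K} (hf : Prime f)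
    (hfg : ¬ f ∣ g) {S : Finset (AxisLine K)} (hS : Set.InjOn pos (S : Set (AxisLine K)))
    (h : ∀ m ∈ S, m.restrictY f = 0 ∧ m.restrictY g = 0) :
    #S ≤ 2 * f.totalDegree * g.totalDegree := by
  obtain ⟨c, hc, hc_deg, hc_mem⟩ := exists_eliminant hf hfg
  refine (card_le_totalDegree_of_restrictY_rename_succ hc hS fun m hm ↦ ?_).trans hc_deg
  exact map_eq_zero_of_mem_span_pair m.restrictY.toRingHom hc_mem (h m hm).1 (h m hm).2

end AxisLines

section Derivatives

variable {σ R : Type*}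

lemma totalDegree_pderiv_lt [CommSemiring R] {f : MvPolynomial σ R} {i : σ} (h : pderiv i f ≠ 0) :
    (pderiv i f).totalDegree < f.totalDegree := by
  obtain ⟨m, hm, hm_deg⟩ : ∃ m ∈ (pderiv i f).support,
      (pderiv i f).totalDegree = m.sum fun _ e ↦ e :=
    exists_mem_eq_sup _ (support_nonempty.mpr h) _
  rw [mem_support_iff, coeff_pderiv] at hm
  have hf : m + Finsupp.single i 1 ∈ f.support := mem_support_iff.mpr (left_ne_zero_of_mul hm)
  have h_le := le_totalDegree hf
  rw [Finsupp.sum_add_index' (by simp) (by simp), Finsupp.sum_single_index rfl] at h_le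
  omega

lemma totalDegree_pderiv_le [CommSemiring R] (f : MvPolynomial σ R) (i : σ) :
    (pderiv i f).totalDegree ≤ f.totalDegree := by
  by_cases h : pderiv i f = 0
  · simp [h]
  · exact (totalDegree_pderiv_lt h).le

lemma not_dvd_pderiv [CommRing R] [IsDomain R] {f : MvPolynomial σ R} {i : σ}
    (h : pderiv i f ≠ 0) : ¬ f ∣ pderiv i f := fun hdvd ↦
  (totalDegree_pderiv_lt h).not_ge (totalDegree_le_of_dvd_of_isDomain hdvd h)

lemma degreeOf_eq_zero_of_pderiv_eq_zero [CommRing R] [IsDomain R] {p : ℕ} [CharP R p]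
    {f : MvPolynomial σ R} (hp : f.totalDegree < p) {i : σ} (h : pderiv i f = 0) :
    degreeOf i f = 0 := by
  classical
  rw [← Nat.le_zero, degreeOf_le_iff]
  intro m hm
  by_contra! hi
  have h_coeff := congrArg (coeff (m - Finsupp.single i 1)) h
  rw [coeff_pderiv, tsub_add_cancel_of_le (Finsupp.single_le_iff.mpr hi), coeff_zero] at h_coeff
  have h_cast : ((m i : ℕ) : R) = 0 := by
    have := (mul_eq_zero.mp h_coeff).resolve_left (mem_support_iff.mp hm)
    rw [Finsupp.tsub_apply, Finsupp.single_eq_same] at this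
    rw [← this, ← Nat.cast_succ, Nat.succ_eq_add_one, Nat.sub_add_cancel hi]
  have h_le : m i ≤ f.totalDegree := (monomial_le_degreeOf i hm).trans (degreeOf_le_totalDegree f i)
  exact absurd (Nat.le_of_dvd hi ((CharP.cast_eq_zero_iff R p _).mp h_cast)) (by omega)

lemma dvd_derivation_of_forall_dvd_X {B : Type*} [CommSemiring R] [CommRing B] [Algebra R B]
    (D : Derivation R B B) (τ : MvPolynomial σ R →ₐ[R] B) {b : B} (h : ∀ i, b ∣ D (τ (X i)))
    (g : MvPolynomial σ R) : b ∣ D (τ g) := by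
  induction g using MvPolynomial.induction_on with
  | C r => rw [← algebraMap_eq, AlgHom.commutes, Derivation.map_algebraMap]; exact dvd_zero b
  | add p q hp hq => simpa only [map_add] using dvd_add hp hq
  | mul_X p i hp =>
    rw [map_mul, Derivation.leibniz]
    exact dvd_add ((h i).mul_left _) (hp.mul_left _)

end Derivatives

section RuledSurfaces

variable {K : Type*} [Field K]

/-- The derivation along the vector field `(-∂f/∂x, ∂f/∂z, 0)` in the coordinates `(z, x, y)`, which
is tangent to the sections `y = const` of the surface `f = 0`. -/
noncomputable def tangentDerivation (f : MvPolynomial (Fin 3) K) :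
    Derivation K (MvPolynomial (Fin 3) K) (MvPolynomial (Fin 3) K) :=
  pderiv 0 f • pderiv 1 - pderiv 1 f • pderiv 0

lemma tangentDerivation_apply (f g : MvPolynomial (Fin 3) K) :
    tangentDerivation f g = pderiv 0 f * pderiv 1 g - pderiv 1 f * pderiv 0 g := by
  simp [tangentDerivation]

lemma tangentDerivation_self (f : MvPolynomial (Fin 3) K) : tangentDerivation f f = 0 := by
  rw [tangentDerivation_apply]
  ring

lemma totalDegree_tangentDerivation_le (f g : MvPolynomial (Fin 3) K) :
    (tangentDerivation f g).totalDegree ≤ f.totalDegree + g.totalDegree := by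
  rw [tangentDerivation_apply]
  exact (totalDegree_sub _ _).trans (max_le
    ((totalDegree_mul _ _).trans
      (add_le_add (totalDegree_pderiv_le _ _) (totalDegree_pderiv_le _ _)))
    ((totalDegree_mul _ _).trans
      (add_le_add (totalDegree_pderiv_le _ _) (totalDegree_pderiv_le _ _))))

/-- The polynomial that vanishes at the inflection points of the sections `y = const` of the surface
`f = 0`: the direction of the tangent field is stationary there to first order. -/
noncomputable def inflectionPoly (f : MvPolynomial (Fin 3) K) : MvPolynomial (Fin 3) K :=
  pderiv 0 f * tangentDerivation f (pderiv 1 f) - pderiv 1 f * tangentDerivation f (pderiv 0 f)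

lemma totalDegree_inflectionPoly_le (f : MvPolynomial (Fin 3) K) :
    (inflectionPoly f).totalDegree ≤ 3 * f.totalDegree := by
  have term_le (i j : Fin 3) : (pderiv i f * tangentDerivation f (pderiv j f)).totalDegree ≤
      3 * f.totalDegree := by
    have h_mul := totalDegree_mul (pderiv i f) (tangentDerivation f (pderiv j f))
    have h_tangent := totalDegree_tangentDerivation_le f (pderiv j f)
    have h_left := totalDegree_pderiv_le f i
    have h_right := totalDegree_pderiv_le f j
    omega
  exact (totalDegree_sub _ _).trans (max_le (term_le 0 1) (term_le 1 0))

lemma AxisLine.derivative_restrictY (m : AxisLine K) (g : MvPolynomial (Fin 3) K) :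
    Polynomial.derivative (m.restrictY g) =
      m.restrictY (pderiv 1 g) + Polynomial.C m.slope * m.restrictY (pderiv 0 g) := by
  induction g using MvPolynomial.induction_on with
  | C r => simp [restrictY]
  | add p q hp hq =>
    simp only [map_add, hp, hq]
    ring
  | mul_X p i hp =>
    simp only [map_mul, Polynomial.derivative_mul, hp, pderiv_mul, map_add]
    fin_cases i <;> simp [restrictY, pderiv_X] <;> ring

lemma AxisLine.restrictY_inflectionPoly_eq_zero {m : AxisLine K} {f : MvPolynomial (Fin 3) K}
    (h : m.restrictY f = 0) : m.restrictY (inflectionPoly f) = 0 := by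
  have hf := m.derivative_restrictY f
  rw [h, Polynomial.derivative_zero] at hf
  have hx : m.restrictY (pderiv 1 f) = -(Polynomial.C m.slope * m.restrictY (pderiv 0 f)) := by
    linear_combination -hf
  have hx' := m.derivative_restrictY (pderiv 1 f)
  simp only [hx, Polynomial.derivative_neg, Polynomial.derivative_C_mul,
    m.derivative_restrictY (pderiv 0 f)] at hx'
  simp only [inflectionPoly, tangentDerivation_apply, map_sub, map_mul, hx]
  linear_combination (-(m.restrictY (pderiv 0 f)) ^ 2) * hx'

/-- Substitution of the point at time `T` on the tangent line of the section `y = const` through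
`(z, x, y)`; the polynomial variable is `T`. -/
noncomputable def tangentShift (f : MvPolynomial (Fin 3) K) :
    MvPolynomial (Fin 3) K →ₐ[K] (MvPolynomial (Fin 3) K)[X] :=
  aeval ![Polynomial.C (X 0) - Polynomial.X * Polynomial.C (pderiv 1 f),
    Polynomial.C (X 1) + Polynomial.X * Polynomial.C (pderiv 0 f), Polynomial.C (X 2)]

lemma natDegree_tangentShift_le (f g : MvPolynomial (Fin 3) K) :
    (tangentShift f g).natDegree ≤ g.totalDegree := by
  refine natDegree_aeval_le_totalDegree (fun i ↦ ?_) g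
  match i with
  | 0 =>
    change (Polynomial.C (X 0) - Polynomial.X * Polynomial.C (pderiv 1 f)).natDegree ≤ 1
    compute_degree
  | 1 =>
    change (Polynomial.C (X 1) + Polynomial.X * Polynomial.C (pderiv 0 f)).natDegree ≤ 1
    compute_degree
  | 2 => exact (Polynomial.natDegree_C _).trans_le zero_le_one

lemma tangentShift_X_zero (f : MvPolynomial (Fin 3) K) :
    tangentShift f (X 0) = Polynomial.C (X 0) - Polynomial.X * Polynomial.C (pderiv 1 f) := by
  simp [tangentShift]

lemma tangentShift_X_one (f : MvPolynomial (Fin 3) K) :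
    tangentShift f (X 1) = Polynomial.C (X 1) + Polynomial.X * Polynomial.C (pderiv 0 f) := by
  simp [tangentShift]

lemma tangentShift_X_two (f : MvPolynomial (Fin 3) K) :
    tangentShift f (X 2) = Polynomial.C (X 2) := by
  simp [tangentShift]

lemma coeff_zero_tangentShift (f g : MvPolynomial (Fin 3) K) :
    (tangentShift f g).coeff 0 = g := by
  induction g using MvPolynomial.induction_on with
  | C r => simp [tangentShift, algebraMap_eq]
  | add p q hp hq => simp [hp, hq]
  | mul_X p i hp =>
    rw [map_mul, Polynomial.mul_coeff_zero, hp]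
    fin_cases i <;> simp [tangentShift]

/-- The action of `tangentDerivation f` on the coefficients of a polynomial in `T`. -/
noncomputable def coeffDerivation (f : MvPolynomial (Fin 3) K) :
    Derivation K (MvPolynomial (Fin 3) K)[X] (MvPolynomial (Fin 3) K)[X] :=
  PolynomialModule.equivPolynomialSelf.compDer (tangentDerivation f).mapCoeffs

lemma coeff_coeffDerivation (f : MvPolynomial (Fin 3) K) (P : (MvPolynomial (Fin 3) K)[X]) (i : ℕ) :
    (coeffDerivation f P).coeff i = tangentDerivation f (P.coeff i) := rfl

lemma coeffDerivation_C (f g : MvPolynomial (Fin 3) K) :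
    coeffDerivation f (Polynomial.C g) = Polynomial.C (tangentDerivation f g) := by
  ext1 i
  rw [coeff_coeffDerivation, Polynomial.coeff_C, Polynomial.coeff_C]
  split_ifs <;> simp

lemma coeffDerivation_X (f : MvPolynomial (Fin 3) K) : coeffDerivation f Polynomial.X = 0 := by
  ext1 i
  rw [coeff_coeffDerivation, Polynomial.coeff_X]
  split_ifs <;> simp

/-- The defect of the transport equation expressing that moving the base point along the tangent
field amounts to moving along the tangent line, up to a change of speed. -/
noncomputable def transportDefect (f : MvPolynomial (Fin 3) K) :
    Derivation K (MvPolynomial (Fin 3) K)[X] (MvPolynomial (Fin 3) K)[X] :=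
  Polynomial.C (pderiv 0 f) • coeffDerivation f -
    (Polynomial.C (pderiv 0 f) +
      Polynomial.X * Polynomial.C (tangentDerivation f (pderiv 0 f))) •
      Polynomial.derivative'.restrictScalars K

lemma transportDefect_apply (f : MvPolynomial (Fin 3) K) (P : (MvPolynomial (Fin 3) K)[X]) :
    transportDefect f P = Polynomial.C (pderiv 0 f) * coeffDerivation f P -
      (Polynomial.C (pderiv 0 f) +
        Polynomial.X * Polynomial.C (tangentDerivation f (pderiv 0 f))) *
        Polynomial.derivative P := by
  simp [transportDefect]

lemma coeff_transportDefect (f : MvPolynomial (Fin 3) K) (P : (MvPolynomial (Fin 3) K)[X])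
    (j : ℕ) :
    (transportDefect f P).coeff j = pderiv 0 f * tangentDerivation f (P.coeff j) -
      (pderiv 0 f * (P.coeff (j + 1) * (j + 1)) +
        tangentDerivation f (pderiv 0 f) * (P.coeff j * j)) := by
  rw [transportDefect_apply, Polynomial.coeff_sub, Polynomial.coeff_C_mul, coeff_coeffDerivation,
    add_mul, Polynomial.coeff_add, Polynomial.coeff_C_mul, Polynomial.coeff_derivative, mul_assoc]
  cases j with
  | zero => simp
  | succ j =>
    rw [Polynomial.coeff_X_mul, Polynomial.coeff_C_mul, Polynomial.coeff_derivative]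
    push_cast
    rfl

lemma transportDefect_tangentShift_X_zero (f : MvPolynomial (Fin 3) K) :
    transportDefect f (tangentShift f (X 0)) =
      -Polynomial.X * Polynomial.C (inflectionPoly f) := by
  have hX : tangentDerivation f (X 0) = -pderiv 1 f := by simp [tangentDerivation_apply, pderiv_X]
  simp only [transportDefect_apply, tangentShift_X_zero, map_sub, map_neg, map_mul,
    Derivation.leibniz, smul_eq_mul, coeffDerivation_C, coeffDerivation_X, hX, inflectionPoly,
    Polynomial.derivative_C, Polynomial.derivative_X]
  ring

lemma transportDefect_tangentShift_X_one (f : MvPolynomial (Fin 3) K) :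
    transportDefect f (tangentShift f (X 1)) = 0 := by
  have hX : tangentDerivation f (X 1) = pderiv 0 f := by simp [tangentDerivation_apply, pderiv_X]
  simp only [transportDefect_apply, tangentShift_X_one, map_add, Derivation.leibniz, smul_eq_mul,
    coeffDerivation_C, coeffDerivation_X, hX, Polynomial.derivative_C, Polynomial.derivative_X]
  ring

lemma transportDefect_tangentShift_X_two (f : MvPolynomial (Fin 3) K) :
    transportDefect f (tangentShift f (X 2)) = 0 := by
  simp [transportDefect_apply, tangentShift_X_two, coeffDerivation_C, tangentDerivation_apply,
    pderiv_X]

lemma C_dvd_transportDefect_tangentShift {f : MvPolynomial (Fin 3) K} (hf : f ∣ inflectionPoly f)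
    (g : MvPolynomial (Fin 3) K) : Polynomial.C f ∣ transportDefect f (tangentShift f g) := by
  refine dvd_derivation_of_forall_dvd_X (transportDefect f) (tangentShift f) (fun i ↦ ?_) g
  match i with
  | 0 =>
    rw [transportDefect_tangentShift_X_zero]
    exact (map_dvd Polynomial.C hf).mul_left _
  | 1 => exact transportDefect_tangentShift_X_one f ▸ dvd_zero _
  | 2 => exact transportDefect_tangentShift_X_two f ▸ dvd_zero _

lemma prime_not_dvd_natCast_add_one {σ : Type*} {p : ℕ} [CharP K p] {f : MvPolynomial σ K}
    (hf : Prime f) {j : ℕ} (hj : j + 1 < p) : ¬ f ∣ (j + 1 : MvPolynomial σ K) := by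
  have hne : ((j + 1 : ℕ) : K) ≠ 0 := by
    rw [Ne, CharP.cast_eq_zero_iff K p]
    exact Nat.not_dvd_of_pos_of_lt j.succ_pos hj
  rw [show (j + 1 : MvPolynomial σ K) = C ((j + 1 : ℕ) : K) by simp]
  exact fun h ↦ hf.not_isUnit (isUnit_of_dvd_unit h (hne.isUnit.map C))

/- If all sections `y = const` consist of inflection points, then the tangent line at a point stays
on the surface: in characteristic `p > deg f` all Taylor coefficients of `f` along it vanish. -/
lemma dvd_coeff_tangentShift_self {p : ℕ} [CharP K p] {f : MvPolynomial (Fin 3) K} (hf : Prime f)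
    (hp : f.totalDegree < p) (hz : pderiv 0 f ≠ 0) (h_infl : f ∣ inflectionPoly f) (j : ℕ) :
    f ∣ (tangentShift f f).coeff j := by
  induction j with
  | zero => rw [coeff_zero_tangentShift]
  | succ j ih =>
    by_cases hj : f.totalDegree < j + 1
    · rw [Polynomial.coeff_eq_zero_of_natDegree_lt ((natDegree_tangentShift_le f f).trans_lt hj)]
      exact dvd_zero f
    have h_defect := (Polynomial.C_dvd_iff_dvd_coeff _ _).mp
      (C_dvd_transportDefect_tangentShift h_infl f) j
    rw [coeff_transportDefect] at h_defect
    have h_tangent : f ∣ tangentDerivation f ((tangentShift f f).coeff j) := by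
      obtain ⟨c, hc⟩ := ih
      rw [hc, Derivation.leibniz, tangentDerivation_self]
      simp
    have h_next : f ∣ pderiv 0 f * ((tangentShift f f).coeff (j + 1) * (j + 1)) := by
      have h_sum := (dvd_sub_right (h_tangent.mul_left _)).mp h_defect
      exact (dvd_add_left ((ih.mul_right _).mul_left _)).mp h_sum
    have h_coeff := (hf.dvd_or_dvd h_next).resolve_left (not_dvd_pderiv hz)
    exact (hf.dvd_or_dvd h_coeff).resolve_right
      (prime_not_dvd_natCast_add_one (p := p) hf (by omega))

end RuledSurfaces

section TangentSweep

variable {K : Type*} [Field K]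

lemma AxisLine.restrictX_X_zero (l : AxisLine K) :
    l.restrictX (X 0) = Polynomial.C l.slope * Polynomial.X + Polynomial.C l.icpt := by
  simp [restrictX]

lemma AxisLine.restrictX_X_one (l : AxisLine K) : l.restrictX (X 1) = Polynomial.C l.pos := by
  simp [restrictX]

lemma AxisLine.restrictX_X_two (l : AxisLine K) : l.restrictX (X 2) = Polynomial.X := by
  simp [restrictX]

/-- Parametrization of the union of the tangent lines to the sections `y = const` of the surface
`f = 0` at the points of the x-line of `l`. The inner variable is `y`, the outer one is the time on
the tangent line. -/
noncomputable def tangentParam (f : MvPolynomial (Fin 3) K) (l : AxisLine K) :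
    MvPolynomial (Fin 3) K →ₐ[K] K[X][X] :=
  (Polynomial.mapAlgHom l.restrictX).comp (tangentShift f)

lemma tangentParam_X_zero (f : MvPolynomial (Fin 3) K) (l : AxisLine K) :
    tangentParam f l (X 0) =
      Polynomial.C (Polynomial.C l.slope * Polynomial.X + Polynomial.C l.icpt) -
        Polynomial.X * Polynomial.C (l.restrictX (pderiv 1 f)) := by
  simp [tangentParam, tangentShift_X_zero, AxisLine.restrictX_X_zero]

lemma tangentParam_X_one (f : MvPolynomial (Fin 3) K) (l : AxisLine K) :
    tangentParam f l (X 1) = Polynomial.C (Polynomial.C l.pos) +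
      Polynomial.X * Polynomial.C (l.restrictX (pderiv 0 f)) := by
  simp [tangentParam, tangentShift_X_one, AxisLine.restrictX_X_one]

lemma tangentParam_X_two (f : MvPolynomial (Fin 3) K) (l : AxisLine K) :
    tangentParam f l (X 2) = Polynomial.C Polynomial.X := by
  simp [tangentParam, tangentShift_X_two, AxisLine.restrictX_X_two]

lemma tangentParam_C (f : MvPolynomial (Fin 3) K) (l : AxisLine K) (a : K) :
    tangentParam f l (C a) = Polynomial.C (Polynomial.C a) := by
  rw [← algebraMap_eq, AlgHom.commutes]
  rfl

lemma tangentParam_toMvPolynomial (f : MvPolynomial (Fin 3) K) (l : AxisLine K) (q : K[X]) :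
    tangentParam f l (q.toMvPolynomial 2) = Polynomial.C q := by
  induction q using Polynomial.induction_on' with
  | add p q hp hq => simp only [map_add, hp, hq]
  | monomial n a =>
    simp only [← Polynomial.C_mul_X_pow_eq_monomial, map_mul, map_pow, Polynomial.toMvPolynomial_C,
      Polynomial.toMvPolynomial_X, tangentParam_C, tangentParam_X_two]

lemma tangentParam_rename_succ (f : MvPolynomial (Fin 3) K) (l : AxisLine K)
    (c : MvPolynomial (Fin 2) K) :
    tangentParam f l (rename Fin.succ c) =
      (Polynomial.Bivariate.swap ((Polynomial.Bivariate.equivMvPolynomial K).symm c)).comp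
        (Polynomial.C (Polynomial.C l.pos) +
          Polynomial.X * Polynomial.C (l.restrictX (pderiv 0 f))) := by
  induction c using MvPolynomial.induction_on with
  | C a => simp [Polynomial.Bivariate.swap_C_C]
  | add p q hp hq => simp only [map_add, hp, hq, Polynomial.add_comp]
  | mul_X p i hp =>
    simp only [map_mul, hp, Polynomial.mul_comp, rename_X]
    congr 1
    match i with
    | 0 => simp [tangentParam_X_one, Polynomial.Bivariate.swap_X]
    | 1 => simp [tangentParam_X_two, Polynomial.Bivariate.swap_Y]

lemma tangentParam_rename_succ_ne_zero {f : MvPolynomial (Fin 3) K} {l : AxisLine K}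
    (hl : l.restrictX (pderiv 0 f) ≠ 0) {c : MvPolynomial (Fin 2) K} (hc : c ≠ 0) :
    tangentParam f l (rename Fin.succ c) ≠ 0 := by
  rw [tangentParam_rename_succ, Ne, Polynomial.comp_eq_zero_iff]
  rintro (h | ⟨-, h⟩)
  · exact hc (by simpa using h)
  · exact hl (by simpa [Polynomial.coeff_C] using congrArg (Polynomial.coeff · 1) h)

lemma tangentParam_self_eq_zero {p : ℕ} [CharP K p] {f : MvPolynomial (Fin 3) K} (hf : Prime f)
    (hp : f.totalDegree < p) (hz : pderiv 0 f ≠ 0) (h_infl : f ∣ inflectionPoly f)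
    {l : AxisLine K} (hl : l.restrictX f = 0) : tangentParam f l f = 0 := by
  ext1 j
  obtain ⟨c, hc⟩ := dvd_coeff_tangentShift_self hf hp hz h_infl j
  simp [tangentParam, hc, hl]

/-- A polynomial vanishing on the union of the tangent lines to the sections `y = const` of the
surface `f = 0` at the points of the x-line of `l`. -/
noncomputable def tangentSweep (f : MvPolynomial (Fin 3) K) (l : AxisLine K) :
    MvPolynomial (Fin 3) K :=
  (l.restrictX (pderiv 0 f)).toMvPolynomial 2 * (X 0 - C l.slope * X 2 - C l.icpt) +
    (l.restrictX (pderiv 1 f)).toMvPolynomial 2 * (X 1 - C l.pos)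

lemma tangentParam_tangentSweep (f : MvPolynomial (Fin 3) K) (l : AxisLine K) :
    tangentParam f l (tangentSweep f l) = 0 := by
  simp only [tangentSweep, map_add, map_sub, map_mul, tangentParam_toMvPolynomial,
    tangentParam_X_zero, tangentParam_X_one, tangentParam_X_two, tangentParam_C]
  ring

/- Two polynomials vanishing on the swept surface: if `f` did not divide `tangentSweep f l`, their
eliminant would be a nonzero polynomial in `x` and `y` vanishing on it too. -/
lemma dvd_tangentSweep {p : ℕ} [CharP K p] {f : MvPolynomial (Fin 3) K} (hf : Prime f)
    (hp : f.totalDegree < p) (h_infl : f ∣ inflectionPoly f) {l : AxisLine K}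
    (hl : l.restrictX f = 0) (hl' : l.restrictX (pderiv 0 f) ≠ 0) : f ∣ tangentSweep f l := by
  by_contra h
  have hz : pderiv 0 f ≠ 0 := fun hz ↦ hl' (by rw [hz, map_zero])
  obtain ⟨c, hc, -, hc_mem⟩ := exists_eliminant hf h
  exact tangentParam_rename_succ_ne_zero hl' hc (map_eq_zero_of_mem_span_pair
    (tangentParam f l : MvPolynomial (Fin 3) K →+* K[X][X]) hc_mem
    (tangentParam_self_eq_zero hf hp hz h_infl hl) (tangentParam_tangentSweep f l))

/- On a fixed `y`, the sweep is the graph of an affine function of `x`, so the x-line and the y-line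
cannot pass over the same `(x, y)` at different heights. -/
lemma AxisLine.meets_of_restrict_tangentSweep_eq_zero {f : MvPolynomial (Fin 3) K}
    {l₁ l m : AxisLine K} (hl : l.restrictX (tangentSweep f l₁) = 0)
    (hm : m.restrictY (tangentSweep f l₁) = 0)
    (h : (l₁.restrictX (pderiv 0 f)).eval m.pos ≠ 0) : l.Meets m := by
  have hl_eval := l.eval_restrictX (tangentSweep f l₁) m.pos
  have hm_eval := m.eval_restrictY (tangentSweep f l₁) l.pos
  rw [hl, Polynomial.eval_zero] at hl_eval
  rw [hm, Polynomial.eval_zero] at hm_eval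
  simp only [tangentSweep, map_add, map_sub, map_mul, eval_X, eval_C, eval_toMvPolynomial,
    Matrix.cons_val] at hl_eval hm_eval
  exact mul_left_cancel₀ h (by linear_combination hm_eval - hl_eval)

end TangentSweep

section RichLines

open AxisLine

variable {K : Type*} [Field K]

open Classical in
/-- The x-lines from `L` that lie on the surface `f = 0` and meet the y-line of `m`. -/
noncomputable def transversals (L : Finset (AxisLine K)) (f : MvPolynomial (Fin 3) K)
    (m : AxisLine K) : Finset (AxisLine K) :=
  {l ∈ L | l.restrictX f = 0 ∧ l.Meets m}

open Classical in
/-- The y-lines from `M` that meet more than `deg f + k` of the x-lines of `L` on the surface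
`f = 0`. -/
noncomputable def richLines (L M : Finset (AxisLine K)) (k : ℕ) (f : MvPolynomial (Fin 3) K) :
    Finset (AxisLine K) :=
  {m ∈ M | f.totalDegree + k < #(transversals L f m)}

open Classical in
/-- Any two distinct y-lines from `M` meet at most `k` common x-lines from `L`. -/
def CommonTransversalsLE (L M : Finset (AxisLine K)) (k : ℕ) : Prop :=
  ∀ m₁ ∈ M, ∀ m₂ ∈ M, m₁ ≠ m₂ → #{l ∈ L | l.Meets m₁ ∧ l.Meets m₂} ≤ k

variable {L M : Finset (AxisLine K)} {k p : ℕ} {f g : MvPolynomial (Fin 3) K}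

lemma transversals_subset (L : Finset (AxisLine K)) (f : MvPolynomial (Fin 3) K)
    (m : AxisLine K) : transversals L f m ⊆ L := by
  classical exact filter_subset _ _

lemma card_transversals_le_totalDegree (hL : Set.InjOn pos (L : Set (AxisLine K)))
    {m : AxisLine K} (hm : m.restrictY f ≠ 0) : #(transversals L f m) ≤ f.totalDegree := by
  classical
  exact card_le_totalDegree_of_meets hm (hL.mono (coe_subset.mpr (transversals_subset L f m)))
    fun _ hl ↦ (mem_filter.mp hl).2

lemma restrictY_eq_zero_of_mem_richLines (hL : Set.InjOn pos (L : Set (AxisLine K)))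
    {m : AxisLine K} (hm : m ∈ richLines L M k f) : m.restrictY f = 0 := by
  by_contra h
  have := card_transversals_le_totalDegree hL h
  have := (mem_filter.mp hm).2
  omega

lemma richLines_subset (L M : Finset (AxisLine K)) (k : ℕ) (f : MvPolynomial (Fin 3) K) :
    richLines L M k f ⊆ M := filter_subset _ _

lemma richLines_injOn (hM : Set.InjOn pos (M : Set (AxisLine K))) :
    Set.InjOn pos (richLines L M k f : Set (AxisLine K)) :=
  hM.mono (coe_subset.mpr (richLines_subset L M k f))

lemma one_le_totalDegree_of_prime {σ : Type*} {f : MvPolynomial σ K} (hf : Prime f) :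
    1 ≤ f.totalDegree := by
  by_contra! h
  rw [Nat.lt_one_iff, totalDegree_eq_zero_iff_eq_C] at h
  have hC : coeff 0 f ≠ 0 := fun h0 ↦ hf.ne_zero (by rw [h, h0, C_0])
  exact hf.not_isUnit (h ▸ hC.isUnit.map C)

lemma card_richLines_le_of_pderiv_eq_zero [CharP K p] (hf : f ≠ 0) (hp : f.totalDegree < p)
    (hL : Set.InjOn pos (L : Set (AxisLine K))) (hM : Set.InjOn pos (M : Set (AxisLine K)))
    (hz : pderiv 0 f = 0) : #(richLines L M k f) ≤ f.totalDegree := by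
  obtain ⟨c, hc, hc_deg⟩ :=
    exists_rename_succ_eq_of_degreeOf_eq_zero (degreeOf_eq_zero_of_pderiv_eq_zero hp hz)
  have hc_ne : c ≠ 0 := by
    rintro rfl
    exact hf (by rw [← hc, map_zero])
  refine (card_le_totalDegree_of_restrictY_rename_succ hc_ne (richLines_injOn hM)
    fun m hm ↦ ?_).trans hc_deg
  rw [hc, restrictY_eq_zero_of_mem_richLines hL hm]

lemma card_richLines_le_of_not_dvd_inflectionPoly (hf : Prime f)
    (hL : Set.InjOn pos (L : Set (AxisLine K))) (hM : Set.InjOn pos (M : Set (AxisLine K)))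
    (h : ¬ f ∣ inflectionPoly f) : #(richLines L M k f) ≤ 6 * f.totalDegree ^ 2 := by
  have h_card := card_le_of_restrictY_eq_zero_of_not_dvd hf h (richLines_injOn (L := L) (k := k) hM)
    fun m hm ↦ have hm_zero := restrictY_eq_zero_of_mem_richLines hL hm
      ⟨hm_zero, restrictY_inflectionPoly_eq_zero hm_zero⟩
  nlinarith [totalDegree_inflectionPoly_le f]

lemma card_richLines_le_of_dvd_inflectionPoly [CharP K p] (hf : Prime f) (hp : f.totalDegree < p)
    (hL : Set.InjOn pos (L : Set (AxisLine K))) (hM : Set.InjOn pos (M : Set (AxisLine K)))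
    (hk : CommonTransversalsLE L M k) (h_infl : f ∣ inflectionPoly f) {l₁ : AxisLine K}
    (hl₁ : l₁.restrictX f = 0) (hl₁' : l₁.restrictX (pderiv 0 f) ≠ 0) :
    #(richLines L M k f) ≤ f.totalDegree + 1 := by
  classical
  set q := l₁.restrictX (pderiv 0 f)
  have h_meets {l m : AxisLine K} (hl : l.restrictX f = 0) (hm : m.restrictY f = 0)
      (hmq : q.eval m.pos ≠ 0) : l.Meets m := by
    have h_dvd := dvd_tangentSweep hf hp h_infl hl₁ hl₁'
    exact meets_of_restrict_tangentSweep_eq_zero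
      (zero_dvd_iff.mp (hl ▸ map_dvd l.restrictX h_dvd))
      (zero_dvd_iff.mp (hm ▸ map_dvd m.restrictY h_dvd)) hmq
  have h_roots : #{m ∈ richLines L M k f | q.eval m.pos = 0} ≤ f.totalDegree :=
    (card_le_natDegree_of_forall_eval_eq_zero hl₁'
      ((richLines_injOn hM).mono (coe_subset.mpr (filter_subset _ _)))
      fun m hm ↦ (mem_filter.mp hm).2).trans
      ((l₁.natDegree_restrictX_le _).trans (totalDegree_pderiv_le f 0))
  have h_nonroots : #{m ∈ richLines L M k f | ¬ q.eval m.pos = 0} ≤ 1 := by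
    refine card_le_one.mpr fun m₁ hm₁ m₂ hm₂ ↦ by_contra fun hne ↦ ?_
    obtain ⟨hm₁, -⟩ := mem_filter.mp hm₁
    obtain ⟨hm₂, hm₂q⟩ := mem_filter.mp hm₂
    have h_sub : transversals L f m₁ ⊆ ({l ∈ L | l.Meets m₁ ∧ l.Meets m₂} : Finset _) :=
      monotone_filter_right L fun l _ hl ↦
        ⟨hl.2, h_meets hl.1 (restrictY_eq_zero_of_mem_richLines hL hm₂) hm₂q⟩
    have h_rich := (mem_filter.mp hm₁).2
    have h_few := (card_le_card h_sub).trans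
      (hk m₁ (richLines_subset _ _ _ _ hm₁) m₂ (richLines_subset _ _ _ _ hm₂) hne)
    omega
  rw [← card_filter_add_card_filter_not (fun m : AxisLine K ↦ q.eval m.pos = 0)]
  exact add_le_add h_roots h_nonroots

lemma card_richLines_le_of_forall_restrictX_pderiv_eq_zero (hf : Prime f)
    (hL : Set.InjOn pos (L : Set (AxisLine K))) (hM : Set.InjOn pos (M : Set (AxisLine K)))
    (hz : pderiv 0 f ≠ 0) (h : ∀ l ∈ L, l.restrictX f = 0 → l.restrictX (pderiv 0 f) = 0) :
    #(richLines L M k f) ≤ 2 * f.totalDegree * f.totalDegree := by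
  classical
  refine (card_le_of_restrictY_eq_zero_of_not_dvd hf (not_dvd_pderiv hz)
    (richLines_injOn (L := L) (k := k) hM)
    fun m hm ↦ ⟨restrictY_eq_zero_of_mem_richLines hL hm, ?_⟩).trans
    (Nat.mul_le_mul_left _ (totalDegree_pderiv_le f 0))
  by_contra hm_ne
  have h_sub : transversals L f m ⊆ transversals L (pderiv 0 f) m :=
    monotone_filter_right L fun l hl hl' ↦ ⟨h l hl hl'.1, hl'.2⟩
  have h_card := (card_le_card h_sub).trans (card_transversals_le_totalDegree hL hm_ne)
  have h_rich := (mem_filter.mp hm).2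
  have h_deg := totalDegree_pderiv_le f 0
  omega

lemma card_richLines_le_of_prime [CharP K p] (hf : Prime f) (hp : f.totalDegree < p)
    (hL : Set.InjOn pos (L : Set (AxisLine K))) (hM : Set.InjOn pos (M : Set (AxisLine K)))
    (hk : CommonTransversalsLE L M k) : #(richLines L M k f) ≤ 6 * f.totalDegree ^ 2 := by
  have h_pos := one_le_totalDegree_of_prime hf
  by_cases hz : pderiv 0 f = 0
  · have := card_richLines_le_of_pderiv_eq_zero (k := k) hf.ne_zero hp hL hM hz
    nlinarith
  by_cases h_infl : f ∣ inflectionPoly f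
  · by_cases h : ∀ l ∈ L, l.restrictX f = 0 → l.restrictX (pderiv 0 f) = 0
    · have := card_richLines_le_of_forall_restrictX_pderiv_eq_zero (k := k) hf hL hM hz h
      nlinarith
    · push Not at h
      obtain ⟨l₁, -, hl₁, hl₁'⟩ := h
      have := card_richLines_le_of_dvd_inflectionPoly hf hp hL hM hk h_infl hl₁ hl₁'
      nlinarith
  · exact card_richLines_le_of_not_dvd_inflectionPoly hf hL hM h_infl

lemma richLines_mul_subset_of_dvd (hf : f ≠ 0) (hg : g ≠ 0) (hfg : f ∣ g) :
    richLines L M k (f * g) ⊆ richLines L M k g := by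
  classical
  refine monotone_filter_right M fun m _ hm ↦ ?_
  have h_sub : transversals L (f * g) m ⊆ transversals L g m :=
    monotone_filter_right L fun l _ hl ↦ by
      refine ⟨?_, hl.2⟩
      rcases mul_eq_zero.mp ((map_mul l.restrictX f g).symm.trans hl.1) with hlf | hlg
      · exact zero_dvd_iff.mp (hlf ▸ map_dvd l.restrictX hfg)
      · exact hlg
  have h_card := card_le_card h_sub
  rw [totalDegree_mul_of_isDomain hf hg] at hm
  omega

open Classical in
lemma richLines_mul_subset (hL : Set.InjOn pos (L : Set (AxisLine K))) (hf : f ≠ 0) (hg : g ≠ 0) :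
    richLines L M k (f * g) ⊆ richLines L M k f ∪ richLines L M k g ∪
      {m ∈ M | m.restrictY f = 0 ∧ m.restrictY g = 0} := by
  intro m hm
  obtain ⟨hmM, hm⟩ := mem_filter.mp hm
  have h_sub : transversals L (f * g) m ⊆ transversals L f m ∪ transversals L g m := by
    intro l
    simp only [transversals, mem_union, mem_filter, map_mul, mul_eq_zero]
    tauto
  have h_card := (card_le_card h_sub).trans (card_union_le _ _)
  rw [totalDegree_mul_of_isDomain hf hg] at hm
  simp only [mem_union, mem_filter, richLines, hmM, true_and]
  by_cases hmf : m.restrictY f = 0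
  · by_cases hmg : m.restrictY g = 0
    · exact .inr ⟨hmf, hmg⟩
    · have := card_transversals_le_totalDegree hL hmg
      exact .inl (.inl (by omega))
  · have := card_transversals_le_totalDegree hL hmf
    exact .inl (.inr (by omega))

lemma card_richLines_mul_le (hf : Prime f) (hg : g ≠ 0)
    (hL : Set.InjOn pos (L : Set (AxisLine K))) (hM : Set.InjOn pos (M : Set (AxisLine K)))
    (hf_card : #(richLines L M k f) ≤ 6 * f.totalDegree ^ 2)
    (hg_card : #(richLines L M k g) ≤ 6 * g.totalDegree ^ 2) :
    #(richLines L M k (f * g)) ≤ 6 * (f * g).totalDegree ^ 2 := by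
  classical
  rw [totalDegree_mul_of_isDomain hf.ne_zero hg]
  by_cases hfg : f ∣ g
  · exact (card_le_card (richLines_mul_subset_of_dvd hf.ne_zero hg hfg)).trans
      (hg_card.trans (by gcongr; omega))
  · have h_common := card_le_of_restrictY_eq_zero_of_not_dvd hf hfg
      (S := {m ∈ M | m.restrictY f = 0 ∧ m.restrictY g = 0})
      (hM.mono (coe_subset.mpr (filter_subset _ _))) fun m hm ↦ (mem_filter.mp hm).2
    have h_union := (card_le_card (richLines_mul_subset (M := M) (k := k) hL hf.ne_zero hg)).trans
      ((card_union_le _ _).trans (Nat.add_le_add_right (card_union_le _ _) _))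
    nlinarith

lemma card_richLines_le [CharP K p] (hf : f ≠ 0) (hp : f.totalDegree < p)
    (hL : Set.InjOn pos (L : Set (AxisLine K))) (hM : Set.InjOn pos (M : Set (AxisLine K)))
    (hk : CommonTransversalsLE L M k) : #(richLines L M k f) ≤ 6 * f.totalDegree ^ 2 := by
  classical
  induction f using UniqueFactorizationMonoid.induction_on_prime with
  | h₁ => exact absurd rfl hf
  | h₂ u hu =>
    have h_empty : richLines L M k u = ∅ := filter_eq_empty_iff.mpr fun m _ ↦ by
      have : transversals L u m = ∅ :=
        filter_eq_empty_iff.mpr fun l _ hl ↦ (hu.map l.restrictX).ne_zero hl.1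
      simp [this]
    simp [h_empty]
  | h₃ g f hg hf_prime ih =>
    have h_deg := totalDegree_mul_of_isDomain hf_prime.ne_zero hg
    exact card_richLines_mul_le hf_prime hg hL hM
      (card_richLines_le_of_prime hf_prime (by omega) hL hM hk) (ih hg (by omega))

end RichLines

section Interpolation

variable {K : Type*} [Field K]

lemma finrank_restrictDegree {σ R : Type*} [Fintype σ] [CommRing R] [Nontrivial R] (t : ℕ) :
    Module.finrank R (restrictDegree σ R t) = (t + 1) ^ Fintype.card σ := by
  have exponents : {n : σ →₀ ℕ // ∀ i, n i ≤ t} ≃ (σ → {k : ℕ // k ≤ t}) :=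
    (Finsupp.equivFunOnFinite.subtypeEquiv (q := fun n : σ → ℕ ↦ ∀ i, n i ≤ t)
      fun _ ↦ Iff.rfl).trans (Equiv.subtypePiEquivPi (p := fun _ k ↦ k ≤ t))
  have h_card : Nat.card {k : ℕ // k ≤ t} = t + 1 := by
    change Nat.card (Set.Iic t) = t + 1
    rw [Nat.card_eq_card_toFinset (Set.Iic t)]
    simp
  rw [restrictDegree, Module.finrank_eq_nat_card_basis (basisRestrictSupport R _),
    Set.coe_ofPred, Nat.card_congr exponents, Nat.card_fun, h_card, Nat.card_eq_fintype_card]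

lemma totalDegree_le_of_mem_restrictDegree {σ R : Type*} [Fintype σ] [CommSemiring R] {t : ℕ}
    {f : MvPolynomial σ R} (hf : f ∈ restrictDegree σ R t) :
    f.totalDegree ≤ Fintype.card σ * t := by
  refine Finset.sup_le fun n hn ↦ ?_
  rw [Finsupp.sum_fintype _ _ fun _ ↦ rfl]
  exact (sum_le_card_nsmul _ _ t fun i _ ↦ (mem_restrictDegree σ f t).mp hf n hn i)

lemma exists_vanishing_polynomial (L : Finset (AxisLine K)) {t : ℕ} (h : 3 * #L ≤ (t + 1) ^ 2) :
    ∃ f : MvPolynomial (Fin 3) K,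
      f ≠ 0 ∧ f.totalDegree ≤ 3 * t ∧ ∀ l ∈ L, l.restrictX f = 0 := by
  let restrictCoeffs : restrictDegree (Fin 3) K t →ₗ[K] (L × Fin (3 * t + 1) → K) :=
    LinearMap.pi fun x ↦
      Polynomial.lcoeff K x.2 ∘ₗ (x.1 : AxisLine K).restrictX.toLinearMap ∘ₗ Submodule.subtype _
  have h_ker : LinearMap.ker restrictCoeffs ≠ ⊥ := by
    apply LinearMap.ker_ne_bot_of_finrank_lt
    rw [finrank_restrictDegree, Module.finrank_fintype_fun_eq_card, Fintype.card_prod,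
      Fintype.card_coe, Fintype.card_fin, Fintype.card_fin]
    nlinarith
  obtain ⟨f, hf, hf_ne⟩ := Submodule.exists_mem_ne_zero_of_ne_bot h_ker
  have hf_deg : (f : MvPolynomial (Fin 3) K).totalDegree ≤ 3 * t :=
    totalDegree_le_of_mem_restrictDegree f.2
  refine ⟨f, by simpa using hf_ne, hf_deg, fun l hl ↦ ?_⟩
  ext j
  by_cases hj : j < 3 * t + 1
  · exact congrFun hf (⟨l, hl⟩, ⟨j, hj⟩)
  · exact Polynomial.coeff_eq_zero_of_natDegree_lt
      ((l.natDegree_restrictX_le f).trans_lt (by omega))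

open Classical in
lemma card_filter_lt_card_meets_le {p : ℕ} [CharP K p] {L M : Finset (AxisLine K)} {k t : ℕ}
    (hL : Set.InjOn AxisLine.pos (L : Set (AxisLine K)))
    (hM : Set.InjOn AxisLine.pos (M : Set (AxisLine K))) (hk : CommonTransversalsLE L M k)
    (ht : 3 * t < p) (hLt : 3 * #L ≤ (t + 1) ^ 2) :
    #{m ∈ M | 3 * t + k < #{l ∈ L | l.Meets m}} ≤ 54 * t ^ 2 := by
  obtain ⟨f, hf, hf_deg, hf_zero⟩ := exists_vanishing_polynomial L hLt
  have h_sub : ({m ∈ M | 3 * t + k < #{l ∈ L | l.Meets m}} : Finset _) ⊆ richLines L M k f := by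
    refine monotone_filter_right M fun m _ hm ↦ ?_
    have h_eq : transversals L f m = ({l ∈ L | l.Meets m} : Finset _) :=
      filter_congr fun l hl ↦ and_iff_right (hf_zero l hl)
    rw [h_eq]
    omega
  calc _ ≤ #(richLines L M k f) := card_le_card h_sub
    _ ≤ 6 * f.totalDegree ^ 2 := card_richLines_le hf (by omega) hL hM hk
    _ ≤ 6 * (3 * t) ^ 2 := by gcongr
    _ = 54 * t ^ 2 := by ring

end Interpolation

section Sampling

variable {α β : Type*} {L : Finset α} {M : Finset β} {R : α → β → Prop} {δ : ℝ}

open Classical in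
/-- The probability that a random subset of `L`, to which every element belongs independently
with probability `δ`, equals `S`. -/
noncomputable def sampleWeight (L : Finset α) (δ : ℝ) (S : Finset α) : ℝ :=
  δ ^ #S * (1 - δ) ^ #(L \ S)

lemma sampleWeight_nonneg (hδ₀ : 0 ≤ δ) (hδ₁ : δ ≤ 1) (S : Finset α) :
    0 ≤ sampleWeight L δ S :=
  mul_nonneg (pow_nonneg hδ₀ _) (pow_nonneg (sub_nonneg.mpr hδ₁) _)

lemma sum_sampleWeight_mul_prod (L : Finset α) (δ : ℝ) (u : α → ℝ) :
    ∑ S ∈ L.powerset, sampleWeight L δ S * ∏ l ∈ S, u l = ∏ l ∈ L, (δ * u l + (1 - δ)) := by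
  classical
  rw [prod_add]
  refine sum_congr rfl fun S _ ↦ ?_
  rw [prod_mul_distrib, prod_const, prod_const, sampleWeight]
  ring_nf

lemma sum_sampleWeight (L : Finset α) (δ : ℝ) : ∑ S ∈ L.powerset, sampleWeight L δ S = 1 := by
  simpa using sum_sampleWeight_mul_prod L δ fun _ ↦ 1

lemma exists_le_of_sum_sampleWeight_mul_le (hδ₀ : 0 ≤ δ) (hδ₁ : δ ≤ 1) {f : Finset α → ℝ} {c : ℝ}
    (h : ∑ S ∈ L.powerset, sampleWeight L δ S * f S ≤ c) : ∃ S ⊆ L, f S ≤ c := by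
  obtain ⟨S, hS, hfS⟩ := (concaveOn_id convex_univ).exists_le_of_centerMass
    (t := L.powerset) (w := sampleWeight L δ) (p := f)
    (fun S _ ↦ sampleWeight_nonneg hδ₀ hδ₁ S) (by simp [sum_sampleWeight]) fun _ _ ↦ Set.mem_univ _
  rw [centerMass_eq_of_sum_1 _ _ (sum_sampleWeight L δ)] at hfS
  exact ⟨S, mem_powerset.mp hS, hfS.trans h⟩

lemma sum_sampleWeight_mul_two_pow_card_le (hδ₀ : 0 ≤ δ) :
    ∑ S ∈ L.powerset, sampleWeight L δ S * 2 ^ #S ≤ Real.exp (δ * #L) := by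
  have h_moment := sum_sampleWeight_mul_prod L δ fun _ ↦ 2
  simp only [prod_const] at h_moment
  calc ∑ S ∈ L.powerset, sampleWeight L δ S * 2 ^ #S = (δ + 1) ^ #L := by rw [h_moment]; ring
    _ ≤ Real.exp δ ^ #L := by gcongr; exact Real.add_one_le_exp δ
    _ = Real.exp (δ * #L) := by rw [← Real.exp_nat_mul, mul_comm]

lemma sum_sampleWeight_mul_half_pow_card_filter_le (hδ₁ : δ ≤ 1) (P : α → Prop)
    [DecidablePred P] :
    ∑ S ∈ L.powerset, sampleWeight L δ S * (1 / 2) ^ #{l ∈ S | P l} ≤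
      Real.exp (-(δ / 2) * #{l ∈ L | P l}) := by
  have h_moment := sum_sampleWeight_mul_prod L δ fun l ↦ if P l then 1 / 2 else 1
  have h_factor (l : α) : δ * (if P l then 1 / 2 else 1) + (1 - δ) =
      if P l then 1 - δ / 2 else 1 := by split_ifs <;> ring
  simp only [h_factor, prod_ite, prod_const, one_pow, mul_one] at h_moment
  rw [h_moment]
  calc (1 - δ / 2) ^ #{l ∈ L | P l} ≤ Real.exp (-(δ / 2)) ^ #{l ∈ L | P l} := by
        gcongr
        · linarith
        · exact Real.one_sub_le_exp_neg _
    _ = Real.exp (-(δ / 2) * #{l ∈ L | P l}) := by rw [← Real.exp_nat_mul, mul_comm]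

lemma le_of_two_pow_le_two_mul_exp {n : ℕ} {x : ℝ} (hx : 0 ≤ x) (h : 2 ^ n ≤ 2 * Real.exp x) :
    (n : ℝ) ≤ 2 + 2 * x := by
  have h_log := Real.log_le_log (by positivity) h
  rw [Real.log_pow, Real.log_mul two_ne_zero (Real.exp_pos x).ne', Real.log_exp] at h_log
  have h_log_two := Real.log_two_gt_d9
  refine le_of_mul_le_mul_right ?_ (Real.log_pos one_lt_two)
  nlinarith

lemma exp_neg_natCast_le_half_pow (n : ℕ) : Real.exp (-n) ≤ (1 / 2) ^ n := by
  have h_two : (2 : ℝ) ≤ Real.exp 1 := by linarith [Real.add_one_le_exp (1 : ℝ)]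
  calc Real.exp (-n) = (Real.exp 1)⁻¹ ^ n := by
        rw [← Real.exp_neg, ← Real.exp_nat_mul, mul_neg_one]
    _ ≤ (1 / 2) ^ n := by
        rw [one_div]
        gcongr

lemma card_filter_le_mul_half_pow_le (M : Finset β) (h : β → ℕ) (T : ℕ) :
    #{m ∈ M | h m ≤ T} * (1 / 2 : ℝ) ^ T ≤ ∑ m ∈ M, (1 / 2 : ℝ) ^ h m := by
  rw [← nsmul_eq_mul, ← sum_const]
  calc ∑ m ∈ M with h m ≤ T, (1 / 2 : ℝ) ^ T ≤ ∑ m ∈ M with h m ≤ T, (1 / 2 : ℝ) ^ h m :=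
        sum_le_sum fun m hm ↦ pow_le_pow_of_le_one (by norm_num) (by norm_num) (mem_filter.mp hm).2
    _ ≤ ∑ m ∈ M, (1 / 2 : ℝ) ^ h m :=
        sum_le_sum_of_subset_of_nonneg (filter_subset _ _) fun _ _ _ ↦ by positivity

open Classical in
/- A single set makes both moments small because it is the normalised sum of the two that is
averaged. -/
lemma exists_sample_moments_le {T r : ℕ} (hδ₀ : 0 ≤ δ) (hδ₁ : δ ≤ 1)
    (hr : ∀ m ∈ M, r ≤ #{l ∈ L | R l m}) (hT : T + 3 ≤ δ * r / 2) :
    ∃ S ⊆ L, 2 ^ #S ≤ 2 * Real.exp (δ * #L) ∧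
      ∑ m ∈ M, (1 / 2 : ℝ) ^ #{l ∈ S | R l m} ≤ (1 / 2) ^ T / 2 * #M := by
  rcases M.eq_empty_or_nonempty with rfl | hM
  · obtain ⟨S, hS, h⟩ := exists_le_of_sum_sampleWeight_mul_le hδ₀ hδ₁
      (sum_sampleWeight_mul_two_pow_card_le (L := L) hδ₀)
    exact ⟨S, hS, h.trans (by linarith [Real.exp_pos (δ * #L)]), by simp⟩
  have : (0 : ℝ) < #M := by exact_mod_cast hM.card_pos
  have h_hits : ∀ m ∈ M, ∑ S ∈ L.powerset, sampleWeight L δ S * (1 / 2) ^ #{l ∈ S | R l m} ≤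
      (1 / 2) ^ (T + 3) := fun m hm ↦ by
    refine (sum_sampleWeight_mul_half_pow_card_filter_le hδ₁ (R · m)).trans
      (le_trans (Real.exp_le_exp.mpr ?_) (exp_neg_natCast_le_half_pow (T + 3)))
    have hrm : (r : ℝ) ≤ #{l ∈ L | R l m} := by exact_mod_cast hr m hm
    push_cast
    nlinarith
  obtain ⟨S, hS, h⟩ := exists_le_of_sum_sampleWeight_mul_le hδ₀ hδ₁ (L := L) (c := 2)
    (f := fun S ↦ 2 ^ #S / Real.exp (δ * #L) +
      (∑ m ∈ M, (1 / 2 : ℝ) ^ #{l ∈ S | R l m}) / ((1 / 2) ^ (T + 3) * #M)) (by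
    simp only [mul_add, sum_add_distrib, ← mul_div_assoc, ← sum_div, mul_sum]
    rw [sum_comm]
    have h_size := div_le_one_of_le₀ (sum_sampleWeight_mul_two_pow_card_le (L := L) hδ₀)
      (Real.exp_pos _).le
    have h_rich := div_le_one_of_le₀ ((sum_le_card_nsmul _ _ _ h_hits).trans_eq
      ((nsmul_eq_mul _ _).trans (mul_comm _ _))) (by positivity)
    linarith)
  have h_size : 2 ^ #S / Real.exp (δ * #L) ≤ 2 := (le_add_of_nonneg_right (by positivity)).trans h
  have h_hit := (le_add_of_nonneg_left (by positivity)).trans h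
  rw [div_le_iff₀ (by positivity)] at h_size h_hit
  refine ⟨S, hS, h_size, h_hit.trans ?_⟩
  rw [pow_add]
  nlinarith [show (0 : ℝ) < (1 / 2) ^ T * #M by positivity]

open Classical in
lemma exists_sample_hitting {T r : ℕ} (hδ₀ : 0 ≤ δ) (hδ₁ : δ ≤ 1)
    (hr : ∀ m ∈ M, r ≤ #{l ∈ L | R l m}) (hT : T + 3 ≤ δ * r / 2) :
    ∃ S ⊆ L, (#S : ℝ) ≤ 2 + 2 * (δ * #L) ∧ #M ≤ 2 * #{m ∈ M | T < #{l ∈ S | R l m}} := by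
  obtain ⟨S, hS, h_size, h_hit⟩ := exists_sample_moments_le hδ₀ hδ₁ hr hT
  refine ⟨S, hS, le_of_two_pow_le_two_mul_exp (by positivity) h_size, ?_⟩
  have h_few : (2 * #{m ∈ M | #{l ∈ S | R l m} ≤ T} : ℝ) ≤ #M := by
    have h_markov := (card_filter_le_mul_half_pow_le M (fun m ↦ #{l ∈ S | R l m}) T).trans h_hit
    refine le_of_mul_le_mul_right ?_ (show (0 : ℝ) < (1 / 2) ^ T by positivity)
    linarith
  have h_split := card_filter_add_card_filter_not (s := M) fun m ↦ #{l ∈ S | R l m} ≤ T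
  simp only [not_le] at h_split
  norm_cast at h_few
  omega

end Sampling

section Incidences

variable {K : Type*} [Field K] {p : ℕ} [CharP K p] {L M : Finset (AxisLine K)} {k : ℕ}

lemma CommonTransversalsLE.mono {L' M' : Finset (AxisLine K)} (h : CommonTransversalsLE L M k)
    (hL : L' ⊆ L) (hM : M' ⊆ M) : CommonTransversalsLE L' M' k := by
  classical
  exact fun m₁ h₁ m₂ h₂ hne ↦
    (card_le_card (filter_subset_filter _ hL)).trans (h m₁ (hM h₁) m₂ (hM h₂) hne)

open Classical in
/- The polynomial method is applied to a sample of density `δ`, whose interpolation degree is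
about `√(δ * #L)`. -/
lemma card_le_of_sample {r : ℕ} {δ : ℝ} (hL : Set.InjOn AxisLine.pos (L : Set (AxisLine K)))
    (hM : Set.InjOn AxisLine.pos (M : Set (AxisLine K))) (hk : CommonTransversalsLE L M k)
    (hr : ∀ m ∈ M, r ≤ #{l ∈ L | l.Meets m}) (hδ₁ : δ ≤ 1) (hp : 108 * (δ * #L) < p ^ 2)
    (hδL : 1 ≤ δ * #L) (hδr : 1728 * #L ≤ δ * r ^ 2) (hδk : 4 * (k + 3) ≤ δ * r) :
    (#M : ℝ) ≤ 1296 * (δ * #L) := by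
  have hδ₀ : 0 ≤ δ := by nlinarith [(#L).cast_nonneg (α := ℝ)]
  set y : ℝ := 12 * (δ * #L)
  have hy₀ : 0 ≤ y := by positivity
  set t : ℕ := ⌊√y⌋₊
  have ht_sq : (t : ℝ) ^ 2 ≤ y :=
    (pow_le_pow_left₀ t.cast_nonneg (Nat.floor_le (Real.sqrt_nonneg y)) 2).trans_eq
      (Real.sq_sqrt hy₀)
  have ht_lt : y < (t + 1 : ℝ) ^ 2 :=
    (Real.sqrt_lt' (by positivity)).mp (Nat.lt_floor_add_one _)
  have htp : 3 * t < p := by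
    refine lt_of_pow_lt_pow_left₀ 2 (Nat.zero_le _) ?_
    rify
    linarith
  have htr : 12 * t ≤ δ * r := by
    refine le_of_sq_le_sq ?_ (by positivity)
    calc (12 * t : ℝ) ^ 2 ≤ 144 * y := by linarith
      _ = δ * (1728 * #L) := by ring
      _ ≤ δ * (δ * r ^ 2) := by gcongr
      _ = (δ * r) ^ 2 := by ring
  obtain ⟨S, hSL, hS, hMS⟩ := exists_sample_hitting (T := 3 * t + k) hδ₀ hδ₁ hr
    (by push_cast; linarith)
  have hSt : 3 * #S ≤ (t + 1) ^ 2 := by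
    rify
    linarith
  have h_rich := card_filter_lt_card_meets_le (hL.mono (coe_subset.mpr hSL)) hM
    (hk.mono hSL Subset.rfl) htp hSt
  have h_card : (#M : ℝ) ≤ 108 * t ^ 2 := by exact_mod_cast hMS.trans (by omega)
  linarith

open Classical in
lemma mul_card_filter_le_card_meets_le (hL : Set.InjOn AxisLine.pos (L : Set (AxisLine K)))
    (hM : Set.InjOn AxisLine.pos (M : Set (AxisLine K))) (hk : CommonTransversalsLE L M k)
    (hk₁ : 1 ≤ k) (hML : #M ≤ #L) (hp : 108 * #L < p ^ 2) (r : ℕ) :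
    (r : ℝ) * #{m ∈ M | r ≤ #{l ∈ L | l.Meets m}} ≤ 55000 * ((√(#L : ℝ) + k) * #L) := by
  set M' : Finset (AxisLine K) := {m ∈ M | r ≤ #{l ∈ L | l.Meets m}}
  have hM'L : (#M' : ℝ) ≤ #L := by exact_mod_cast (card_filter_le _ _).trans hML
  rcases M'.eq_empty_or_nonempty with h_empty | ⟨m, hm⟩
  · rw [h_empty, card_empty, Nat.cast_zero, mul_zero]
    positivity
  have hrL : (r : ℝ) ≤ #L := by exact_mod_cast (mem_filter.mp hm).2.trans (card_filter_le _ _)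
  have h_sqrt : √(#L : ℝ) ^ 2 = #L := Real.sq_sqrt (by positivity)
  by_cases hr_small : (r : ℝ) < 42 * √(#L : ℝ) + 16 * k
  · calc (r : ℝ) * #M' ≤ (42 * √(#L : ℝ) + 16 * k) * #L := by gcongr
      _ ≤ 55000 * ((√(#L : ℝ) + k) * #L) := by
        nlinarith [show 0 ≤ √(#L : ℝ) * #L by positivity, show (0 : ℝ) ≤ k * #L by positivity]
  push Not at hr_small
  have hk₁' : (1 : ℝ) ≤ k := by exact_mod_cast hk₁
  have hr₀ : (0 : ℝ) < r := by nlinarith [Real.sqrt_nonneg (#L : ℝ)]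
  set δ : ℝ := (42 * √(#L : ℝ) + 16 * k) / r
  have hδr : δ * r = 42 * √(#L : ℝ) + 16 * k := div_mul_cancel₀ _ hr₀.ne'
  have hδ₁ : δ ≤ 1 := div_le_one_of_le₀ hr_small hr₀.le
  have hp' : (108 * #L : ℝ) < p ^ 2 := by exact_mod_cast hp
  have h_card : (#M' : ℝ) ≤ 1296 * (δ * #L) := by
    refine card_le_of_sample hL (hM.mono (coe_subset.mpr (filter_subset _ _)))
      (hk.mono Subset.rfl (filter_subset _ _)) (fun m hm ↦ (mem_filter.mp hm).2) hδ₁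
      ?_ ?_ ?_ ?_
    · nlinarith
    · nlinarith [Real.sqrt_nonneg (#L : ℝ)]
    · nlinarith [Real.sqrt_nonneg (#L : ℝ)]
    · linarith [Real.sqrt_nonneg (#L : ℝ)]
  calc (r : ℝ) * #M' ≤ r * (1296 * (δ * #L)) := by gcongr
    _ = 1296 * (δ * r * #L) := by ring
    _ = 1296 * ((42 * √(#L : ℝ) + 16 * k) * #L) := by rw [hδr]
    _ ≤ 55000 * ((√(#L : ℝ) + k) * #L) := by
      nlinarith [show 0 ≤ √(#L : ℝ) * #L by positivity, show (0 : ℝ) ≤ k * #L by positivity]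

lemma sum_eq_sum_Icc_card_le {ι : Type*} (s : Finset ι) (f : ι → ℕ) {N : ℕ}
    (hf : ∀ i ∈ s, f i ≤ N) : ∑ i ∈ s, f i = ∑ r ∈ Icc 1 N, #{i ∈ s | r ≤ f i} := by
  simp only [card_filter]
  rw [sum_comm]
  refine sum_congr rfl fun i hi ↦ ?_
  have h_Icc : {r ∈ Icc 1 N | r ≤ f i} = Icc 1 (f i) := by
    ext r
    have := hf i hi
    simp only [mem_filter, mem_Icc]
    omega
  rw [← card_filter, h_Icc, Nat.card_Icc, Nat.add_sub_cancel]

open Classical in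
theorem sum_card_meets_le (hL : Set.InjOn AxisLine.pos (L : Set (AxisLine K)))
    (hM : Set.InjOn AxisLine.pos (M : Set (AxisLine K))) (hk : CommonTransversalsLE L M k)
    (hk₁ : 1 ≤ k) (hML : #M ≤ #L) (hp : 108 * #L < p ^ 2) :
    ((∑ m ∈ M, #{l ∈ L | l.Meets m} : ℕ) : ℝ) ≤
      55000 * ((√(#L : ℝ) + k) * #L) * (1 + Real.log #L) := by
  rw [sum_eq_sum_Icc_card_le M _ fun m _ ↦ card_filter_le L _]
  push_cast
  calc ∑ r ∈ Icc 1 #L, (#{m ∈ M | r ≤ #{l ∈ L | l.Meets m}} : ℝ)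
      ≤ ∑ r ∈ Icc 1 #L, 55000 * ((√(#L : ℝ) + k) * #L) * (r : ℝ)⁻¹ := by
        refine sum_le_sum fun r hr ↦ ?_
        have hr₀ : (0 : ℝ) < r := by exact_mod_cast (mem_Icc.mp hr).1
        rw [← div_eq_mul_inv, le_div_iff₀' hr₀]
        exact mul_card_filter_le_card_meets_le hL hM hk hk₁ hML hp r
    _ = 55000 * ((√(#L : ℝ) + k) * #L) * (harmonic #L : ℚ) := by
        rw [← mul_sum, harmonic_eq_sum_Icc]
        push_cast
        rfl
    _ ≤ 55000 * ((√(#L : ℝ) + k) * #L) * (1 + Real.log #L) := by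
        gcongr
        exact harmonic_le_one_add_log #L

end Incidences

section GenericPosition

variable {F : Type*} [Field F]

lemma coeffs_eq_zero_of_cubic_ratFunc_X_eq_zero {a b c d : F}
    (h : RatFunc.C a * RatFunc.X ^ 3 + RatFunc.C b * RatFunc.X ^ 2 + RatFunc.C c * RatFunc.X +
      RatFunc.C d = 0) : a = 0 ∧ b = 0 ∧ c = 0 ∧ d = 0 := by
  have h_poly : (⟨a, b, c, d⟩ : Cubic F).toPoly = 0 := by
    apply RatFunc.algebraMap_injective F
    simpa [Cubic.toPoly] using h
  exact Cubic.ext_iff.mp ((Cubic.toPoly_eq_zero_iff _).mp h_poly)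

lemma one_add_X_sq_mul_C_ne_zero (c : F) : 1 + RatFunc.X ^ 2 * RatFunc.C c ≠ 0 := fun h ↦
  one_ne_zero (coeffs_eq_zero_of_cubic_ratFunc_X_eq_zero (a := 0) (b := c) (c := 0) (d := 1)
    (by simp only [map_zero, map_one]; linear_combination h)).2.2.2

namespace AxisLine

/-- The image of a line under a projective transformation with a transcendental parameter. It
preserves incidences but moves different lines into different planes. -/
noncomputable def generic (l : AxisLine F) : AxisLine (RatFunc F) where
  pos := (RatFunc.C l.pos + RatFunc.X * RatFunc.C l.slope) / (1 + RatFunc.X ^ 2 * RatFunc.C l.icpt)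
  slope := RatFunc.C l.slope / (1 + RatFunc.X ^ 2 * RatFunc.C l.icpt)
  icpt := RatFunc.C l.icpt / (1 + RatFunc.X ^ 2 * RatFunc.C l.icpt)

lemma eq_of_pos_generic_eq {l m : AxisLine F} (hl : l.pos ≠ 0)
    (h : l.generic.pos = m.generic.pos) : l = m := by
  simp only [generic] at h
  rw [div_eq_div_iff (one_add_X_sq_mul_C_ne_zero _) (one_add_X_sq_mul_C_ne_zero _)] at h
  obtain ⟨-, h_icpt, h_slope, h_pos⟩ := coeffs_eq_zero_of_cubic_ratFunc_X_eq_zero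
    (a := l.slope * m.icpt - m.slope * l.icpt) (b := l.pos * m.icpt - m.pos * l.icpt)
    (c := l.slope - m.slope) (d := l.pos - m.pos)
    (by simp only [map_sub, map_mul]; linear_combination h)
  rw [sub_eq_zero] at h_pos h_slope
  rw [← h_pos, ← mul_sub, mul_eq_zero, or_iff_right hl, sub_eq_zero] at h_icpt
  exact AxisLine.ext h_pos h_slope h_icpt.symm

@[simp]
lemma meets_generic {l m : AxisLine F} : l.generic.Meets m.generic ↔ l.Meets m := by
  have hl := one_add_X_sq_mul_C_ne_zero l.icpt
  have hm := one_add_X_sq_mul_C_ne_zero m.icpt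
  rw [Meets, Meets, ← (RatFunc.C_injective (K := F)).eq_iff]
  simp only [generic, map_add, map_mul]
  field_simp
  constructor <;> intro h <;> linear_combination h

end AxisLine

/- The lines are put into general position over `RatFunc F`, where the injectivity of
`AxisLine.pos` required by the polynomial method comes for free. -/
open Classical in
theorem sum_card_meets_self_le {p : ℕ} [CharP F p] {L : Finset (AxisLine F)} {k : ℕ}
    (hL : ∀ l ∈ L, l.pos ≠ 0) (hk : CommonTransversalsLE L L k) (hk₁ : 1 ≤ k)
    (hp : 108 * #L < p ^ 2) :
    ((∑ m ∈ L, #{l ∈ L | l.Meets m} : ℕ) : ℝ) ≤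
      55000 * ((√(#L : ℝ) + k) * #L) * (1 + Real.log #L) := by
  have : CharP (RatFunc F) p := charP_of_injective_ringHom (RatFunc.C_injective (K := F)) p
  have h_inj : Set.InjOn AxisLine.generic (L : Set (AxisLine F)) := fun l hl m _ h ↦
    AxisLine.eq_of_pos_generic_eq (hL l hl) (congrArg AxisLine.pos h)
  have h_pos : Set.InjOn AxisLine.pos (L.image AxisLine.generic : Set (AxisLine (RatFunc F))) := by
    rw [coe_image]
    exact (Set.InjOn.image_of_comp fun l hl m _ h ↦ AxisLine.eq_of_pos_generic_eq (hL l hl) h)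
  have h_card (P : AxisLine (RatFunc F) → Prop) [DecidablePred P] :
      #{l ∈ L.image AxisLine.generic | P l} = #{l ∈ L | P l.generic} := by
    rw [filter_image, card_image_of_injOn (h_inj.mono (coe_subset.mpr (filter_subset _ _)))]
  have h_trans : CommonTransversalsLE (L.image AxisLine.generic) (L.image AxisLine.generic) k := by
    intro m₁ h₁ m₂ h₂ hne
    obtain ⟨m₁, hm₁, rfl⟩ := mem_image.mp h₁
    obtain ⟨m₂, hm₂, rfl⟩ := mem_image.mp h₂
    rw [h_card]
    simpa only [AxisLine.meets_generic] using hk m₁ hm₁ m₂ hm₂ (ne_of_apply_ne _ hne)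
  have h_image : #(L.image AxisLine.generic) = #L := card_image_of_injOn h_inj
  have h_bound := sum_card_meets_le h_pos h_pos h_trans hk₁ le_rfl (h_image ▸ hp)
  simpa only [h_image, sum_image h_inj, h_card, AxisLine.meets_generic] using h_bound

end GenericPosition

section SumProductCollisions

variable {F : Type*}

/-- The line with slope `x.1`, position `x.2.1` and intercept `x.2.2`. -/
@[simps]
def lineOfTriple : F × F × F ↪ AxisLine F where
  toFun x := ⟨x.2.1, x.1, x.2.2⟩
  inj' := by
    rintro ⟨a, b, c⟩ ⟨a', b', c'⟩ h
    simp_all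

/-- The lines with slope and position in `B` and intercept in `C`. -/
def gridLines (B C : Finset F) : Finset (AxisLine F) :=
  (B ×ˢ B ×ˢ C).map lineOfTriple

lemma mem_gridLines {B C : Finset F} {l : AxisLine F} :
    l ∈ gridLines B C ↔ l.slope ∈ B ∧ l.pos ∈ B ∧ l.icpt ∈ C := by
  simp only [gridLines, mem_map, mem_product, Prod.exists]
  constructor
  · rintro ⟨a, b, c, h, rfl⟩
    exact h
  · exact fun h ↦ ⟨l.slope, l.pos, l.icpt, h, rfl⟩

lemma card_gridLines (B C : Finset F) : #(gridLines B C) = #B ^ 2 * #C := by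
  rw [gridLines, card_map, card_product, card_product, sq, mul_assoc]

variable [Field F]

lemma commonTransversalsLE_gridLines (B C : Finset F) :
    CommonTransversalsLE (gridLines B C) (gridLines B C) #B := by
  classical
  intro m₁ _ m₂ _ hne
  by_cases h_pos : m₁.pos = m₂.pos
  · refine card_le_card_of_injOn AxisLine.slope
      (fun l hl ↦ (mem_gridLines.mp (mem_filter.mp hl).1).1) ?_
    intro l hl l' hl' h
    obtain ⟨-, h₁, h₂⟩ := mem_filter.mp (mem_coe.mp hl)
    obtain ⟨-, h₁', h₂'⟩ := mem_filter.mp (mem_coe.mp hl')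
    simp only [AxisLine.Meets, ← h_pos, ← h] at h₁ h₂ h₁' h₂'
    have h_slope : m₁.slope ≠ m₂.slope := fun hs ↦
      hne (AxisLine.ext h_pos hs (by rw [hs] at h₁; linear_combination h₂ - h₁))
    have h_pos' : l.pos = l'.pos := mul_left_cancel₀ (sub_ne_zero.mpr h_slope)
      (by linear_combination h₂ - h₁ - h₂' + h₁')
    refine AxisLine.ext h_pos' h ?_
    rw [h_pos'] at h₁
    linear_combination h₁ - h₁'
  · refine card_le_card_of_injOn AxisLine.pos
      (fun l hl ↦ (mem_gridLines.mp (mem_filter.mp hl).1).2.1) ?_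
    intro l hl l' hl' h
    obtain ⟨-, h₁, h₂⟩ := mem_filter.mp (mem_coe.mp hl)
    obtain ⟨-, h₁', h₂'⟩ := mem_filter.mp (mem_coe.mp hl')
    simp only [AxisLine.Meets, ← h] at h₁ h₂ h₁' h₂'
    have h_slope : l.slope = l'.slope := mul_left_cancel₀ (sub_ne_zero.mpr h_pos)
      (by linear_combination h₁ - h₂ - h₁' + h₂')
    refine AxisLine.ext h h_slope ?_
    rw [h_slope] at h₁
    linear_combination h₁ - h₁'

variable [DecidableEq F]

/-- The number of solutions of `b₁ * b₂ + c = b₁' * b₂' + c'` with `bᵢ, bᵢ' ∈ B` and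
`c, c' ∈ C`. -/
def sumProdCollisions (B C : Finset F) : ℕ :=
  #{z ∈ (B ×ˢ B ×ˢ C) ×ˢ (B ×ˢ B ×ˢ C) |
    z.1.1 * z.1.2.1 + z.1.2.2 = z.2.1 * z.2.2.1 + z.2.2.2}

open Classical in
lemma sumProdCollisions_eq_sum_card_meets (B C : Finset F) :
    sumProdCollisions B C = ∑ m ∈ gridLines B C, #{l ∈ gridLines B C | l.Meets m} := by
  have h_sum : ∑ m ∈ gridLines B C, #{l ∈ gridLines B C | l.Meets m} =
      #{z ∈ gridLines B C ×ˢ gridLines B C | z.1.Meets z.2} := by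
    simp only [card_filter, sum_product_right]
  rw [h_sum]
  refine card_nbij'
    (fun z ↦ (⟨z.2.2.1, z.1.1, z.1.2.2⟩, ⟨z.1.2.1, z.2.1, z.2.2.2⟩))
    (fun w ↦ ((w.1.slope, w.2.pos, w.1.icpt), (w.2.slope, w.1.pos, w.2.icpt)))
    ?_ ?_ (fun _ _ ↦ rfl) (fun _ _ ↦ rfl)
  all_goals
    intro z
    simp only [mem_coe, mem_filter, mem_product, mem_gridLines]
    unfold AxisLine.Meets
    tauto

theorem sumProdCollisions_le {p : ℕ} [CharP F p] {B C : Finset F} (hB : B.Nonempty) (hB₀ : 0 ∉ B)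
    (hp : 108 * (#B ^ 2 * #C) < p ^ 2) :
    (sumProdCollisions B C : ℝ) ≤
      55000 * ((√(#B ^ 2 * #C) + #B) * (#B ^ 2 * #C)) * (1 + Real.log (#B ^ 2 * #C)) := by
  have h_bound := sum_card_meets_self_le (L := gridLines B C)
    (fun l hl h ↦ hB₀ (h ▸ (mem_gridLines.mp hl).2.1)) (commonTransversalsLE_gridLines B C)
    hB.card_pos (by rwa [card_gridLines])
  rw [← sumProdCollisions_eq_sum_card_meets, card_gridLines] at h_bound
  exact_mod_cast h_bound

end SumProductCollisions

section SecondMoment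

lemma sum_sub_mean_sq_le {ι : Type*} [Fintype ι] (H : ι → ℝ) {m : ℝ}
    (hm : ∑ i, H i = Fintype.card ι * m) : ∑ i, (H i - m) ^ 2 ≤ ∑ i, H i ^ 2 :=
  calc ∑ i, (H i - m) ^ 2 = ∑ i, (H i ^ 2 - 2 * m * H i + m ^ 2) :=
        sum_congr rfl fun i _ ↦ by ring
    _ = ∑ i, H i ^ 2 - Fintype.card ι * m ^ 2 := by
        rw [sum_add_distrib, sum_sub_distrib, ← mul_sum, hm, sum_const, card_univ, nsmul_eq_mul]
        ring
    _ ≤ ∑ i, H i ^ 2 := sub_le_self _ (by positivity)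

lemma sum_card_fiber_sq {α β : Type*} [Fintype β] [DecidableEq β] (T : Finset α) (φ : α → β) :
    ∑ d, #{x ∈ T | φ x = d} ^ 2 = #{z ∈ T ×ˢ T | φ z.1 = φ z.2} := by
  rw [card_eq_sum_card_fiberwise (f := fun z ↦ φ z.1) (t := univ)
    fun _ _ ↦ mem_coe.mpr (mem_univ _)]
  refine sum_congr rfl fun d _ ↦ ?_
  rw [sq, ← card_product, ← filter_product]
  congr 1
  ext z
  simp only [mem_filter, mem_product]
  grind

lemma sum_comp_eq_sum_card_fiber_mul {α β : Type*} [Fintype β] [DecidableEq β] (T : Finset α)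
    (f : α → β) (φ : β → ℝ) : ∑ x ∈ T, φ (f x) = ∑ c, (#{x ∈ T | f x = c} : ℝ) * φ c := by
  rw [← sum_fiberwise T f]
  refine sum_congr rfl fun c _ ↦ ?_
  rw [← nsmul_eq_mul, ← sum_const]
  exact sum_congr rfl fun x hx ↦ by rw [(mem_filter.mp hx).2]

variable {F : Type*} [Field F] [Fintype F]

/-- The additive autocorrelation of a real function on a finite field. -/
def autocorr (h : F → ℝ) (b : F) : ℝ := ∑ x, h x * h (x + b)

lemma autocorr_zero (h : F → ℝ) : autocorr h 0 = ∑ x, h x ^ 2 := by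
  simp only [autocorr, add_zero, sq]

lemma sum_autocorr_eq_zero {h : F → ℝ} (hh : ∑ x, h x = 0) : ∑ b, autocorr h b = 0 := by
  simp only [autocorr]
  rw [sum_comm]
  refine sum_eq_zero fun x _ ↦ ?_
  have h_shift : ∑ b, h (x + b) = ∑ b, h b := Equiv.sum_comp (Equiv.addLeft x) h
  rw [← mul_sum, h_shift, hh, mul_zero]

lemma sum_sq_dilate_eq {a : F} (ha : a ≠ 0) (f h : F → ℝ) :
    ∑ d, (∑ c, f c * h ((c + d) / a)) ^ 2 =
      ∑ c, ∑ c', f c * f c' * autocorr h ((c' - c) / a) := by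
  simp only [sq, sum_mul_sum]
  rw [sum_comm]
  refine sum_congr rfl fun c _ ↦ ?_
  rw [sum_comm]
  refine sum_congr rfl fun c' _ ↦ ?_
  rw [autocorr, mul_sum]
  refine Fintype.sum_equiv ((Equiv.addLeft c).trans (Equiv.divRight₀ a ha)) _ _ fun d ↦ ?_
  have h_arg : (c + d) / a + (c' - c) / a = (c' + d) / a := by ring
  simp only [Equiv.trans_apply, Equiv.coe_addLeft, Equiv.divRight₀_apply, h_arg]
  ring

lemma sum_autocorr_div [DecidableEq F] {h : F → ℝ} (hh : ∑ x, h x = 0) (u : F) :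
    ∑ a ∈ univ.erase 0, autocorr h (u / a) =
      (if u = 0 then Fintype.card F * autocorr h 0 else 0) - autocorr h 0 := by
  split_ifs with hu
  · simp only [hu, zero_div, sum_const, nsmul_eq_mul, card_erase_of_mem (mem_univ (0 : F)),
      card_univ, Nat.cast_pred Fintype.card_pos]
    ring
  · have h_inv : ∑ a ∈ univ.erase (0 : F), autocorr h (u / a) =
        ∑ b ∈ univ.erase 0, autocorr h b := by
      refine sum_nbij' (u / ·) (u / ·) ?_ ?_ ?_ ?_ fun _ _ ↦ rfl
      all_goals
        intro a ha
        have ha₀ : a ≠ 0 := (mem_erase.mp ha).1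
        simp [hu, ha₀]
    rw [h_inv, ← sum_autocorr_eq_zero hh, ← add_sum_erase univ (autocorr h) (mem_univ 0)]
    ring

/- For a mean-zero `h`, the sum of `autocorr h (u / a)` over all `a ≠ 0` is nonpositive unless
`u = 0`, so only the diagonal terms contribute. -/
lemma sum_sum_sq_dilate_le {B : Finset F} (hB₀ : 0 ∉ B) (f : F → ℝ) {h : F → ℝ}
    (hh : ∑ x, h x = 0) :
    ∑ a ∈ B, ∑ d, (∑ c, f c * h ((c + d) / a)) ^ 2 ≤
      Fintype.card F * (∑ x, h x ^ 2) * ∑ c, f c ^ 2 := by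
  classical
  calc ∑ a ∈ B, ∑ d, (∑ c, f c * h ((c + d) / a)) ^ 2
      ≤ ∑ a ∈ univ.erase (0 : F), ∑ d, (∑ c, f c * h ((c + d) / a)) ^ 2 :=
        sum_le_sum_of_subset_of_nonneg (subset_erase.mpr ⟨subset_univ _, hB₀⟩)
          fun _ _ _ ↦ by positivity
    _ = ∑ a ∈ univ.erase (0 : F), ∑ c, ∑ c', f c * f c' * autocorr h ((c' - c) / a) :=
        sum_congr rfl fun a ha ↦ sum_sq_dilate_eq (mem_erase.mp ha).1 f h
    _ = ∑ c, ∑ c', f c * f c' *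
          ((if c' - c = 0 then Fintype.card F * autocorr h 0 else 0) - autocorr h 0) := by
        rw [sum_comm]
        refine sum_congr rfl fun c _ ↦ ?_
        rw [sum_comm]
        exact sum_congr rfl fun c' _ ↦ by rw [← mul_sum, sum_autocorr_div hh]
    _ = Fintype.card F * autocorr h 0 * (∑ c, f c ^ 2) - autocorr h 0 * (∑ c, f c) ^ 2 := by
        simp only [mul_sub, sum_sub_distrib, sub_eq_zero, mul_ite, mul_zero, sum_ite_eq',
          mem_univ, if_true, ← mul_sum, ← sum_mul, sq]
        ring
    _ ≤ Fintype.card F * (∑ x, h x ^ 2) * ∑ c, f c ^ 2 := by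
        rw [autocorr_zero]
        exact sub_le_self _ (by positivity)

end SecondMoment

section ProductRepresentations

variable {F : Type*} [Field F] [DecidableEq F]

/-- The number of representations of `w` as a product of two elements of `B`. -/
def mulRep (B : Finset F) (w : F) : ℕ := #{x ∈ B ×ˢ B | x.1 * x.2 = w}

lemma mulRep_eq_sum_div_mem {B : Finset F} (hB₀ : 0 ∉ B) (w : F) :
    mulRep B w = ∑ a ∈ B, if w / a ∈ B then 1 else 0 := by
  rw [mulRep, card_filter, sum_product]
  refine sum_congr rfl fun a ha ↦ ?_
  have ha₀ : a ≠ 0 := fun h ↦ hB₀ (h ▸ ha)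
  simp only [mul_comm a, ← eq_div_iff ha₀, sum_ite_eq']

lemma mulRep_le_card {B : Finset F} (hB₀ : 0 ∉ B) (w : F) : mulRep B w ≤ #B := by
  rw [mulRep_eq_sum_div_mem hB₀, ← card_filter]
  exact card_filter_le _ _

lemma sum_mulRep_add_eq_card (B C : Finset F) (d : F) :
    ∑ c ∈ C, mulRep B (c + d) = #{x ∈ B ×ˢ B ×ˢ C | x.1 * x.2.1 - x.2.2 = d} := by
  simp only [mulRep, card_filter, sum_product]
  rw [sum_comm]
  refine sum_congr rfl fun a _ ↦ ?_
  rw [sum_comm]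
  simp only [sub_eq_iff_eq_add']

lemma card_mul_sub_collisions_eq (B C : Finset F) :
    #{z ∈ (B ×ˢ B ×ˢ C) ×ˢ (B ×ˢ B ×ˢ C) |
      z.1.1 * z.1.2.1 - z.1.2.2 = z.2.1 * z.2.2.1 - z.2.2.2} = sumProdCollisions B C := by
  refine card_nbij' (fun z ↦ ((z.1.1, z.1.2.1, z.2.2.2), (z.2.1, z.2.2.1, z.1.2.2)))
    (fun z ↦ ((z.1.1, z.1.2.1, z.2.2.2), (z.2.1, z.2.2.1, z.1.2.2)))
    ?_ ?_ (fun _ _ ↦ rfl) (fun _ _ ↦ rfl)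
  all_goals
    intro z
    simp only [mem_coe, mem_filter, mem_product]
    rintro ⟨h_mem, h_eq⟩
    exact ⟨by tauto, by linear_combination h_eq⟩

variable [Fintype F]

lemma sum_mulRep (B : Finset F) : ∑ w, mulRep B w = #B ^ 2 := by
  rw [sq, ← card_product]
  exact (card_eq_sum_card_fiberwise fun _ _ ↦ mem_coe.mpr (mem_univ _)).symm

/-- The excess of the number of pairs `(x, y)` of products with `y - x = d` and `x ∈ C` over its
expected value, the products being taken from `B` with multiplicity. -/
noncomputable def prodDiscrepancy (B C : Finset F) (d : F) : ℝ :=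
  ∑ c ∈ C, (mulRep B c : ℝ) * (mulRep B (c + d) - (#B : ℝ) ^ 2 / Fintype.card F)

lemma sum_sq_prodDiscrepancy_le_collisions {B C : Finset F} {M : ℝ}
    (hM : ∀ c ∈ C, (mulRep B c : ℝ) ≤ M) :
    ∑ d, prodDiscrepancy B C d ^ 2 ≤ M ^ 2 * sumProdCollisions B C := by
  set mean : ℝ := ∑ c ∈ C, (mulRep B c : ℝ) * ((#B : ℝ) ^ 2 / Fintype.card F) with h_mean
  have h_sum : ∑ d, ∑ c ∈ C, (mulRep B c : ℝ) * mulRep B (c + d) = Fintype.card F * mean := by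
    rw [sum_comm, h_mean, mul_sum]
    refine sum_congr rfl fun c _ ↦ ?_
    have h_shift : ∑ d, mulRep B (c + d) = #B ^ 2 :=
      (Equiv.sum_comp (Equiv.addLeft c) (mulRep B)).trans (sum_mulRep B)
    rw [← mul_sum, ← Nat.cast_sum, h_shift]
    have : (Fintype.card F : ℝ) ≠ 0 := Nat.cast_ne_zero.mpr Fintype.card_ne_zero
    push_cast
    field_simp
  have h_count : ∑ d, (∑ c ∈ C, mulRep B (c + d)) ^ 2 = sumProdCollisions B C := by
    simp only [sum_mulRep_add_eq_card]
    rw [sum_card_fiber_sq, card_mul_sub_collisions_eq]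
  calc ∑ d, prodDiscrepancy B C d ^ 2
      = ∑ d, (∑ c ∈ C, (mulRep B c : ℝ) * mulRep B (c + d) - mean) ^ 2 := by
        simp only [prodDiscrepancy, h_mean, mul_sub, sum_sub_distrib]
    _ ≤ ∑ d, (∑ c ∈ C, (mulRep B c : ℝ) * mulRep B (c + d)) ^ 2 := sum_sub_mean_sq_le _ h_sum
    _ ≤ ∑ d, (∑ c ∈ C, M * (mulRep B (c + d) : ℝ)) ^ 2 := by
        gcongr with d _ c hc
        exact hM c hc
    _ = M ^ 2 * sumProdCollisions B C := by
        simp only [← mul_sum, mul_pow]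
        rw [← h_count]
        push_cast
        rfl

/-- The indicator function of `B`, shifted to have mean zero. -/
noncomputable def balancedIndicator (B : Finset F) (x : F) : ℝ :=
  (if x ∈ B then 1 else 0) - (#B : ℝ) / Fintype.card F

lemma sum_balancedIndicator (B : Finset F) : ∑ x, balancedIndicator B x = 0 := by
  have : (Fintype.card F : ℝ) ≠ 0 := Nat.cast_ne_zero.mpr Fintype.card_ne_zero
  simp only [balancedIndicator, sum_sub_distrib, sum_ite_mem, univ_inter, sum_const,
    nsmul_eq_mul, mul_one, card_univ]
  field_simp
  ring

lemma sum_sq_balancedIndicator_le (B : Finset F) : ∑ x, balancedIndicator B x ^ 2 ≤ #B := by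
  have : (Fintype.card F : ℝ) ≠ 0 := Nat.cast_ne_zero.mpr Fintype.card_ne_zero
  calc ∑ x, balancedIndicator B x ^ 2 ≤ ∑ x, (if x ∈ B then 1 else 0 : ℝ) ^ 2 :=
        sum_sub_mean_sq_le _ (by simp; field_simp)
    _ = #B := by simp

lemma mulRep_sub_eq_sum_balancedIndicator {B : Finset F} (hB₀ : 0 ∉ B) (w : F) :
    (mulRep B w : ℝ) - (#B : ℝ) ^ 2 / Fintype.card F = ∑ a ∈ B, balancedIndicator B (w / a) := by
  simp only [balancedIndicator, sum_sub_distrib, sum_const, nsmul_eq_mul,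
    mulRep_eq_sum_div_mem hB₀]
  push_cast
  ring

lemma sum_sq_prodDiscrepancy_le_card {B : Finset F} (hB₀ : 0 ∉ B) (C : Finset F) :
    ∑ d, prodDiscrepancy B C d ^ 2 ≤
      Fintype.card F * (#B : ℝ) ^ 2 * ∑ c ∈ C, (mulRep B c : ℝ) ^ 2 := by
  set f : F → ℝ := fun c ↦ if c ∈ C then (mulRep B c : ℝ) else 0 with hf
  have h_expand (d : F) : prodDiscrepancy B C d =
      ∑ a ∈ B, ∑ c, f c * balancedIndicator B ((c + d) / a) := by
    rw [sum_comm]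
    simp only [prodDiscrepancy, mulRep_sub_eq_sum_balancedIndicator hB₀, ← mul_sum]
    simp only [hf, ite_mul, zero_mul, sum_ite_mem, univ_inter]
  have hf_sq : ∑ c, f c ^ 2 = ∑ c ∈ C, (mulRep B c : ℝ) ^ 2 := by simp [hf, ite_pow]
  calc ∑ d, prodDiscrepancy B C d ^ 2
      ≤ ∑ d, #B * ∑ a ∈ B, (∑ c, f c * balancedIndicator B ((c + d) / a)) ^ 2 := by
        simp only [h_expand]
        exact sum_le_sum fun d _ ↦ sq_sum_le_card_mul_sum_sq
    _ = #B * ∑ a ∈ B, ∑ d, (∑ c, f c * balancedIndicator B ((c + d) / a)) ^ 2 := by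
        rw [← mul_sum, sum_comm]
    _ ≤ #B * (Fintype.card F * (∑ x, balancedIndicator B x ^ 2) * ∑ c, f c ^ 2) := by
        gcongr
        exact sum_sum_sq_dilate_le hB₀ f (sum_balancedIndicator B)
    _ ≤ #B * (Fintype.card F * #B * ∑ c ∈ C, (mulRep B c : ℝ) ^ 2) := by
        rw [hf_sq]
        gcongr
        exact sum_sq_balancedIndicator_le B
    _ = Fintype.card F * (#B : ℝ) ^ 2 * ∑ c ∈ C, (mulRep B c : ℝ) ^ 2 := by ring

end ProductRepresentations

section LevelSets

open scoped Combinatorics.Additive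

variable {F : Type*} [Field F] [DecidableEq F] {B C : Finset F} {t : ℝ}

lemma card_le_sq_of_one_le_mulRep (hC : ∀ c ∈ C, 1 ≤ mulRep B c) : #C ≤ #B ^ 2 := by
  have h_sub : C ⊆ (B ×ˢ B).image fun x ↦ x.1 * x.2 := fun c hc ↦
    have ⟨x, hx⟩ := card_pos.mp (hC c hc)
    mem_image.mpr ⟨x, mem_filter.mp hx⟩
  calc #C ≤ #(B ×ˢ B) := (card_le_card h_sub).trans card_image_le
    _ = #B ^ 2 := by rw [card_product, sq]

lemma log_sq_mul_card_le (hC : ∀ c ∈ C, 1 ≤ mulRep B c) :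
    Real.log (#B ^ 2 * #C) ≤ 4 * Real.log #B := by
  rcases C.eq_empty_or_nonempty with rfl | hC_ne
  · simpa using Real.log_natCast_nonneg #B
  have h_card : (#C : ℝ) ≤ (#B : ℝ) ^ 2 := by exact_mod_cast card_le_sq_of_one_le_mulRep hC
  have hC_pos : (0 : ℝ) < #C := Nat.cast_pos.mpr hC_ne.card_pos
  have hB_pos : (0 : ℝ) < (#B : ℝ) ^ 2 := hC_pos.trans_le h_card
  calc Real.log (#B ^ 2 * #C) ≤ Real.log ((#B : ℝ) ^ 4) :=
        Real.log_le_log (by positivity) (by nlinarith)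
    _ = 4 * Real.log #B := Real.log_pow _ 4

lemma mul_sqrt_card_le_sqrt_mulEnergy (ht : 0 ≤ t) (hC : ∀ c ∈ C, t ≤ mulRep B c) :
    t * √(#C) ≤ √Eₘ[B] := by
  rcases C.eq_empty_or_nonempty with rfl | hC_ne
  · simp
  have h_le : #C * t ≤ (#{x ∈ B ×ˢ B | x.1 * x.2 ∈ C} : ℝ) := by
    rw [← sum_card_fiberwise_eq_card_filter, Nat.cast_sum, ← nsmul_eq_mul]
    exact card_nsmul_le_sum _ _ _ hC
  have h_sq : (#{x ∈ B ×ˢ B | x.1 * x.2 ∈ C} : ℝ) ^ 2 ≤ #C * Eₘ[B] := by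
    exact_mod_cast card_sq_le_card_mul_mulEnergy B B C
  have hC_pos : (0 : ℝ) < #C := Nat.cast_pos.mpr hC_ne.card_pos
  refine Real.le_sqrt_of_sq_le (le_of_mul_le_mul_left ?_ hC_pos)
  calc #C * (t * √(#C)) ^ 2 = (#C * t) ^ 2 := by
        rw [mul_pow t, Real.sq_sqrt hC_pos.le]
        ring
    _ ≤ (#{x ∈ B ×ˢ B | x.1 * x.2 ∈ C} : ℝ) ^ 2 := by gcongr
    _ ≤ #C * Eₘ[B] := h_sq

variable [Fintype F]

lemma sum_sq_prodDiscrepancy_le_of_lt_sq_char {p : ℕ} [CharP F p] (hB : B.Nonempty) (hB₀ : 0 ∉ B)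
    (ht : 1 ≤ t) (hC_ne : C.Nonempty) (hC : ∀ c ∈ C, t ≤ mulRep B c ∧ mulRep B c ≤ 2 * t)
    (hp : 108 * (#B ^ 2 * #C) < p ^ 2) :
    ∑ d, prodDiscrepancy B C d ^ 2 ≤
      440000 * (#B : ℝ) ^ 3 * (t * #C) * √Eₘ[B] * (1 + 4 * Real.log #B) := by
  have h_energy : t * √(#C) ≤ √Eₘ[B] :=
    mul_sqrt_card_le_sqrt_mulEnergy (by linarith) fun c hc ↦ (hC c hc).1
  have h_one : 1 ≤ √(#C : ℝ) :=
    Real.one_le_sqrt.mpr (Nat.one_le_cast.mpr hC_ne.card_pos)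
  have h_log : Real.log (#B ^ 2 * #C) ≤ 4 * Real.log #B :=
    log_sq_mul_card_le fun c hc ↦ by exact_mod_cast ht.trans (hC c hc).1
  have h_log₀ : 0 ≤ Real.log (#B ^ 2 * #C) := by
    exact_mod_cast Real.log_natCast_nonneg (#B ^ 2 * #C)
  have h_sqrt : √(#B ^ 2 * #C : ℝ) = #B * √(#C) := by
    rw [Real.sqrt_mul (by positivity), Real.sqrt_sq (by positivity)]
  calc ∑ d, prodDiscrepancy B C d ^ 2 ≤ (2 * t) ^ 2 * sumProdCollisions B C :=
        sum_sq_prodDiscrepancy_le_collisions fun c hc ↦ (hC c hc).2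
    _ ≤ (2 * t) ^ 2 * (55000 * ((√(#B ^ 2 * #C) + #B) * (#B ^ 2 * #C)) *
          (1 + Real.log (#B ^ 2 * #C))) := by
        gcongr
        exact sumProdCollisions_le hB hB₀ hp
    _ ≤ (2 * t) ^ 2 * (55000 * ((#B * √(#C) + #B * √(#C)) * (#B ^ 2 * #C)) *
          (1 + 4 * Real.log #B)) := by
        rw [h_sqrt]
        gcongr
        exact le_mul_of_one_le_right (Nat.cast_nonneg _) h_one
    _ = 220000 * (#B : ℝ) ^ 3 * (t * #C) * (t * √(#C) + t * √(#C)) * (1 + 4 * Real.log #B) := by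
        ring
    _ ≤ 220000 * (#B : ℝ) ^ 3 * (t * #C) * (√Eₘ[B] + √Eₘ[B]) * (1 + 4 * Real.log #B) := by
        gcongr
    _ = 440000 * (#B : ℝ) ^ 3 * (t * #C) * √Eₘ[B] * (1 + 4 * Real.log #B) := by ring

lemma sum_sq_prodDiscrepancy_le_of_sq_card_le (hB₀ : 0 ∉ B) (ht : 0 ≤ t)
    (hC : ∀ c ∈ C, t ≤ mulRep B c ∧ mulRep B c ≤ 2 * t)
    (hF : Fintype.card F ^ 2 ≤ 108 * (#B ^ 2 * #C)) :
    ∑ d, prodDiscrepancy B C d ^ 2 ≤ 44 * (#B : ℝ) ^ 3 * (t * #C) * √Eₘ[B] := by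
  have h_card : (Fintype.card F : ℝ) ≤ 11 * (#B * √(#C)) := by
    have hF' : (Fintype.card F : ℝ) ^ 2 ≤ 108 * (#B ^ 2 * #C) := by exact_mod_cast hF
    refine (pow_le_pow_iff_left₀ (by positivity) (by positivity) two_ne_zero).mp ?_
    rw [mul_pow, mul_pow, Real.sq_sqrt (Nat.cast_nonneg _)]
    have : (0 : ℝ) ≤ #B ^ 2 * #C := by positivity
    linarith
  have h_sq : ∑ c ∈ C, (mulRep B c : ℝ) ^ 2 ≤ #C * (2 * t) ^ 2 := by
    rw [← nsmul_eq_mul]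
    exact sum_le_card_nsmul _ _ _ fun c hc ↦ by gcongr; exact (hC c hc).2
  calc ∑ d, prodDiscrepancy B C d ^ 2
      ≤ Fintype.card F * (#B : ℝ) ^ 2 * ∑ c ∈ C, (mulRep B c : ℝ) ^ 2 :=
        sum_sq_prodDiscrepancy_le_card hB₀ C
    _ ≤ 11 * (#B * √(#C)) * (#B : ℝ) ^ 2 * (#C * (2 * t) ^ 2) := by gcongr
    _ = 44 * (#B : ℝ) ^ 3 * (t * #C) * (t * √(#C)) := by ring
    _ ≤ 44 * (#B : ℝ) ^ 3 * (t * #C) * √Eₘ[B] := by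
        gcongr
        exact mul_sqrt_card_le_sqrt_mulEnergy ht fun c hc ↦ (hC c hc).1

theorem sum_sq_prodDiscrepancy_le {p : ℕ} [Fact p.Prime] {B C : Finset (ZMod p)} (hB₀ : 0 ∉ B)
    (ht : 1 ≤ t) (hC : ∀ c ∈ C, t ≤ mulRep B c ∧ mulRep B c ≤ 2 * t) :
    ∑ d, prodDiscrepancy B C d ^ 2 ≤
      440000 * (#B : ℝ) ^ 3 * (t * #C) * √Eₘ[B] * (1 + 4 * Real.log #B) := by
  rcases C.eq_empty_or_nonempty with rfl | hC_ne
  · simp [prodDiscrepancy]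
  have hB : B.Nonempty := card_pos.mp <| pow_pos_iff two_ne_zero |>.mp <|
    hC_ne.card_pos.trans_le <| card_le_sq_of_one_le_mulRep fun c hc ↦ by
      exact_mod_cast ht.trans (hC c hc).1
  have ht₀ : 0 ≤ t := by linarith
  rcases lt_or_ge (108 * (#B ^ 2 * #C)) (p ^ 2) with hp | hp
  · exact sum_sq_prodDiscrepancy_le_of_lt_sq_char hB hB₀ ht hC_ne hC hp
  · calc ∑ d, prodDiscrepancy B C d ^ 2 ≤ 44 * (#B : ℝ) ^ 3 * (t * #C) * √Eₘ[B] :=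
          sum_sq_prodDiscrepancy_le_of_sq_card_le hB₀ ht₀ hC (by rwa [ZMod.card])
      _ ≤ 440000 * (#B : ℝ) ^ 3 * (t * #C) * √Eₘ[B] * (1 + 4 * Real.log #B) := by
          have h_log₀ : 0 ≤ Real.log #B := Real.log_natCast_nonneg _
          refine (le_mul_of_one_le_right (b := 1 + 4 * Real.log #B) (by positivity)
            (by linarith)).trans ?_
          gcongr
          norm_num

end LevelSets

section DyadicDecomposition

open scoped Combinatorics.Additive

/-- The number of representations of `d` as a difference of two elements of `A`. -/
def subRep {G : Type*} [AddCommGroup G] [DecidableEq G] (A : Finset G) (d : G) : ℕ :=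
  #{x ∈ A ×ˢ A | x.1 - x.2 = d}

lemma sum_subRep {G : Type*} [AddCommGroup G] [Fintype G] [DecidableEq G] (A : Finset G) :
    ∑ d, subRep A d = #A ^ 2 := by
  rw [sq, ← card_product]
  exact (card_eq_sum_card_fiberwise fun _ _ ↦ mem_coe.mpr (mem_univ _)).symm

lemma sum_subRep_sq {G : Type*} [AddCommGroup G] [Fintype G] [DecidableEq G] (A : Finset G) :
    ∑ d, subRep A d ^ 2 = E[A] := by
  simp only [subRep]
  rw [sum_card_fiber_sq]
  refine card_nbij' (fun z ↦ (z.1, z.2.swap)) (fun z ↦ (z.1, z.2.swap)) ?_ ?_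
    (fun _ _ ↦ rfl) (fun _ _ ↦ rfl)
  all_goals
    intro z
    simp only [mem_coe, mem_filter, mem_product, Prod.fst_swap, Prod.snd_swap,
      sub_eq_sub_iff_add_eq_add, add_comm z.2.1]
    grind

variable {F : Type*} [Field F] [DecidableEq F]

lemma card_mul_eq_mul_add_eq_sum [Fintype F] (B : Finset F) (d : F) :
    (#{z ∈ (B ×ˢ B) ×ˢ (B ×ˢ B) | z.2.1 * z.2.2 = z.1.1 * z.1.2 + d} : ℝ) =
      ∑ c, (mulRep B c : ℝ) * mulRep B (c + d) := by
  calc (#{z ∈ (B ×ˢ B) ×ˢ (B ×ˢ B) | z.2.1 * z.2.2 = z.1.1 * z.1.2 + d} : ℝ)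
      = ∑ x ∈ B ×ˢ B, (mulRep B (x.1 * x.2 + d) : ℝ) := by
        rw [card_filter, sum_product, Nat.cast_sum]
        simp only [mulRep, card_filter]
    _ = ∑ c, (mulRep B c : ℝ) * mulRep B (c + d) :=
        sum_comp_eq_sum_card_fiber_mul (B ×ˢ B) (fun x ↦ x.1 * x.2) fun c ↦ (mulRep B (c + d) : ℝ)

lemma sumProdCollisions_eq_sum_card (B A : Finset F) :
    sumProdCollisions B A = ∑ y ∈ A ×ˢ A,
      #{z ∈ (B ×ˢ B) ×ˢ (B ×ˢ B) | z.2.1 * z.2.2 = z.1.1 * z.1.2 + (y.1 - y.2)} := by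
  have h_prod : ∑ y ∈ A ×ˢ A,
        #{z ∈ (B ×ˢ B) ×ˢ (B ×ˢ B) | z.2.1 * z.2.2 = z.1.1 * z.1.2 + (y.1 - y.2)} =
      #{w ∈ (A ×ˢ A) ×ˢ ((B ×ˢ B) ×ˢ (B ×ˢ B)) |
        w.2.2.1 * w.2.2.2 = w.2.1.1 * w.2.1.2 + (w.1.1 - w.1.2)} := by
    rw [card_filter, sum_product (A ×ˢ A)]
    simp only [card_filter]
  rw [h_prod]
  refine card_nbij' (fun z ↦ ((z.1.2.2, z.2.2.2), ((z.1.1, z.1.2.1), (z.2.1, z.2.2.1))))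
    (fun w ↦ ((w.2.1.1, w.2.1.2, w.1.1), (w.2.2.1, w.2.2.2, w.1.2)))
    ?_ ?_ (fun _ _ ↦ rfl) (fun _ _ ↦ rfl)
  all_goals
    intro z
    simp only [mem_coe, mem_filter, mem_product]
    rintro ⟨h_mem, h_eq⟩
    exact ⟨by tauto, by linear_combination -h_eq⟩

variable [Fintype F]

lemma sumProdCollisions_eq_sum_subRep_mul (B A : Finset F) :
    (sumProdCollisions B A : ℝ) =
      ∑ d, (subRep A d : ℝ) * ∑ c, (mulRep B c : ℝ) * mulRep B (c + d) := by
  rw [sumProdCollisions_eq_sum_card, Nat.cast_sum]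
  simp only [card_mul_eq_mul_add_eq_sum]
  exact sum_comp_eq_sum_card_fiber_mul (A ×ˢ A) (fun y ↦ y.1 - y.2)
    fun d ↦ ∑ c, (mulRep B c : ℝ) * mulRep B (c + d)

lemma sumProdCollisions_sub_eq_sum_prodDiscrepancy (B A : Finset F) :
    (sumProdCollisions B A : ℝ) - (#B : ℝ) ^ 4 * (#A : ℝ) ^ 2 / Fintype.card F =
      ∑ d, (subRep A d : ℝ) * prodDiscrepancy B univ d := by
  have h_mulRep : ∑ c, (mulRep B c : ℝ) = (#B : ℝ) ^ 2 := by exact_mod_cast sum_mulRep B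
  have h_subRep : ∑ d, (subRep A d : ℝ) = (#A : ℝ) ^ 2 := by exact_mod_cast sum_subRep A
  simp only [prodDiscrepancy, mul_sub, sum_sub_distrib, ← sum_mul, h_mulRep, h_subRep,
    sumProdCollisions_eq_sum_subRep_mul]
  ring

/-- The elements whose number of representations as a product of two elements of `B` lies in
`[2 ^ j, 2 ^ (j + 1))`. -/
def dyadicLevel (B : Finset F) (j : ℕ) : Finset F :=
  {c | 2 ^ j ≤ mulRep B c ∧ mulRep B c < 2 ^ (j + 1)}

lemma mem_dyadicLevel {B : Finset F} {j : ℕ} {c : F} :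
    c ∈ dyadicLevel B j ↔ 2 ^ j ≤ mulRep B c ∧ mulRep B c < 2 ^ (j + 1) := by
  simp [dyadicLevel]

lemma sum_mulRep_mul_eq_sum_dyadicLevel {B : Finset F} (hB₀ : 0 ∉ B) (φ : F → ℝ) :
    ∑ c, (mulRep B c : ℝ) * φ c =
      ∑ j ∈ range (Nat.log 2 #B + 1), ∑ c ∈ dyadicLevel B j, (mulRep B c : ℝ) * φ c := by
  have h_level (j : ℕ) :
      dyadicLevel B j = ({c | mulRep B c ≠ 0 ∧ Nat.log 2 (mulRep B c) = j} : Finset F) := by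
    ext c
    simp only [mem_dyadicLevel, mem_filter, mem_univ, true_and]
    constructor
    · intro h
      have h_ne : mulRep B c ≠ 0 := ((Nat.two_pow_pos j).trans_le h.1).ne'
      exact ⟨h_ne, (Nat.log_eq_iff (Or.inr ⟨one_lt_two, h_ne⟩)).mpr h⟩
    · rintro ⟨h_ne, h_log⟩
      exact (Nat.log_eq_iff (Or.inr ⟨one_lt_two, h_ne⟩)).mp h_log
  simp only [h_level, ← filter_filter]
  rw [sum_fiberwise_of_maps_to fun c _ ↦
    mem_range_succ_iff.mpr (Nat.log_mono_right (mulRep_le_card hB₀ c)), sum_filter_of_ne]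
  intro c _ hc h
  simp [h] at hc

lemma prodDiscrepancy_univ_eq_sum_dyadicLevel {B : Finset F} (hB₀ : 0 ∉ B) (d : F) :
    prodDiscrepancy B univ d =
      ∑ j ∈ range (Nat.log 2 #B + 1), prodDiscrepancy B (dyadicLevel B j) d :=
  sum_mulRep_mul_eq_sum_dyadicLevel hB₀ _

lemma sumProdCollisions_sub_eq_sum_dyadicLevel {B : Finset F} (hB₀ : 0 ∉ B) (A : Finset F) :
    (sumProdCollisions B A : ℝ) - (#B : ℝ) ^ 4 * (#A : ℝ) ^ 2 / Fintype.card F =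
      ∑ j ∈ range (Nat.log 2 #B + 1),
        ∑ d, (subRep A d : ℝ) * prodDiscrepancy B (dyadicLevel B j) d := by
  rw [sumProdCollisions_sub_eq_sum_prodDiscrepancy, sum_comm]
  refine sum_congr rfl fun d _ ↦ ?_
  rw [prodDiscrepancy_univ_eq_sum_dyadicLevel hB₀, mul_sum]

lemma sum_two_pow_mul_card_dyadicLevel_le {B : Finset F} (hB₀ : 0 ∉ B) :
    ∑ j ∈ range (Nat.log 2 #B + 1), 2 ^ j * (#(dyadicLevel B j) : ℝ) ≤ (#B : ℝ) ^ 2 := by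
  have h_sum := sum_mulRep_mul_eq_sum_dyadicLevel hB₀ fun _ ↦ 1
  simp only [mul_one] at h_sum
  have h_total : ∑ c, (mulRep B c : ℝ) = (#B : ℝ) ^ 2 := by exact_mod_cast sum_mulRep B
  rw [← h_total, h_sum]
  refine sum_le_sum fun j _ ↦ ?_
  rw [mul_comm, ← nsmul_eq_mul]
  exact card_nsmul_le_sum _ _ _ fun c hc ↦ by exact_mod_cast (mem_dyadicLevel.mp hc).1

lemma sum_sqrt_le_sqrt_card_mul_sqrt_sum {ι : Type*} (s : Finset ι) {w : ι → ℝ}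
    (hw : ∀ i ∈ s, 0 ≤ w i) : ∑ i ∈ s, √(w i) ≤ √(#s) * √(∑ i ∈ s, w i) := by
  have h := Real.sum_mul_le_sqrt_mul_sqrt s (fun _ ↦ 1) fun i ↦ √(w i)
  simpa [sum_congr rfl fun i hi ↦ Real.sq_sqrt (hw i hi)] using h

lemma log_le_logb_two (n : ℕ) : Real.log n ≤ Real.logb 2 n := by
  rw [Real.logb, le_div_iff₀ (Real.log_pos one_lt_two)]
  exact mul_le_of_le_one_right (Real.log_natCast_nonneg n) (by linarith [Real.log_two_lt_d9])

lemma sqrt_mul_log_le (n : ℕ) {E : ℝ} (hE : 0 ≤ E) :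
    √(440000 * (n : ℝ) ^ 3 * E * (1 + 4 * Real.log n)) ≤
      1400 * (n * √n) * √E * √(Real.logb 2 n + 1) := by
  have h_logb : 0 ≤ Real.logb 2 n + 1 := by
    linarith [log_le_logb_two n, Real.log_natCast_nonneg n]
  refine Real.sqrt_le_iff.mpr ⟨by positivity, ?_⟩
  calc 440000 * (n : ℝ) ^ 3 * E * (1 + 4 * Real.log n)
      ≤ 440000 * (n : ℝ) ^ 3 * E * (4 * (Real.logb 2 n + 1)) := by
        gcongr
        linarith [log_le_logb_two n]
    _ = 1760000 * ((n : ℝ) ^ 3 * E * (Real.logb 2 n + 1)) := by ring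
    _ ≤ 1960000 * ((n : ℝ) ^ 3 * E * (Real.logb 2 n + 1)) := by
        gcongr
        norm_num
    _ = (1400 * (n * √n) * √E * √(Real.logb 2 n + 1)) ^ 2 := by
        simp only [mul_pow, Real.sq_sqrt (Nat.cast_nonneg n), Real.sq_sqrt hE,
          Real.sq_sqrt h_logb]
        ring

variable {p : ℕ} [Fact p.Prime] {B : Finset (ZMod p)}

lemma sum_subRep_mul_prodDiscrepancy_dyadicLevel_le (hB₀ : 0 ∉ B) (A : Finset (ZMod p)) (j : ℕ) :
    ∑ d, (subRep A d : ℝ) * prodDiscrepancy B (dyadicLevel B j) d ≤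
      √E[A] * (√(440000 * (#B : ℝ) ^ 3 * √Eₘ[B] * (1 + 4 * Real.log #B)) *
        √(2 ^ j * #(dyadicLevel B j))) := by
  have h_energy : ∑ d, (subRep A d : ℝ) ^ 2 = E[A] := by exact_mod_cast sum_subRep_sq A
  have h_level : ∀ c ∈ dyadicLevel B j,
      (2 : ℝ) ^ j ≤ mulRep B c ∧ mulRep B c ≤ 2 * (2 : ℝ) ^ j := by
    intro c hc
    obtain ⟨h_lower, h_upper⟩ := mem_dyadicLevel.mp hc
    rw [pow_succ'] at h_upper
    exact ⟨by exact_mod_cast h_lower, by exact_mod_cast h_upper.le⟩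
  have h_moment := sum_sq_prodDiscrepancy_le hB₀ (one_le_pow₀ one_le_two) h_level
  calc ∑ d, (subRep A d : ℝ) * prodDiscrepancy B (dyadicLevel B j) d
      ≤ √(∑ d, (subRep A d : ℝ) ^ 2) * √(∑ d, prodDiscrepancy B (dyadicLevel B j) d ^ 2) :=
        Real.sum_mul_le_sqrt_mul_sqrt _ _ _
    _ ≤ √E[A] * √(440000 * (#B : ℝ) ^ 3 * √Eₘ[B] * (1 + 4 * Real.log #B) *
          (2 ^ j * #(dyadicLevel B j))) := by
        rw [h_energy]
        gcongr
        exact h_moment.trans_eq (by ring)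
    _ = √E[A] * (√(440000 * (#B : ℝ) ^ 3 * √Eₘ[B] * (1 + 4 * Real.log #B)) *
          √(2 ^ j * #(dyadicLevel B j))) := by
        rw [Real.sqrt_mul' _ (by positivity)]

lemma sum_sqrt_two_pow_mul_card_dyadicLevel_le (hB₀ : 0 ∉ B) :
    ∑ j ∈ range (Nat.log 2 #B + 1), √(2 ^ j * #(dyadicLevel B j)) ≤
      √(Real.logb 2 #B + 1) * #B :=
  calc ∑ j ∈ range (Nat.log 2 #B + 1), √(2 ^ j * #(dyadicLevel B j))
      ≤ √(#(range (Nat.log 2 #B + 1))) *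
          √(∑ j ∈ range (Nat.log 2 #B + 1), 2 ^ j * #(dyadicLevel B j)) :=
        sum_sqrt_le_sqrt_card_mul_sqrt_sum _ fun _ _ ↦ by positivity
    _ ≤ √(Real.logb 2 #B + 1) * √((#B : ℝ) ^ 2) := by
        gcongr
        · rw [card_range]
          push_cast
          gcongr
          exact_mod_cast Real.natLog_le_logb #B 2
        · exact sum_two_pow_mul_card_dyadicLevel_le hB₀
    _ = √(Real.logb 2 #B + 1) * #B := by rw [Real.sqrt_sq (Nat.cast_nonneg _)]

theorem sumProdCollisions_sub_le (hB₀ : 0 ∉ B) (A : Finset (ZMod p)) :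
    (sumProdCollisions B A : ℝ) - (#B : ℝ) ^ 4 * (#A : ℝ) ^ 2 / p ≤
      1400 * ((#B : ℝ) ^ 2 * √(#B)) * √E[A] * √√Eₘ[B] * (Real.logb 2 #B + 1) := by
  have h_logb : 0 ≤ Real.logb 2 #B + 1 := by
    linarith [log_le_logb_two #B, Real.log_natCast_nonneg #B]
  obtain ⟨K, hK⟩ : ∃ K, K = √(440000 * (#B : ℝ) ^ 3 * √Eₘ[B] * (1 + 4 * Real.log #B)) := ⟨_, rfl⟩
  have hK_le : K ≤ 1400 * (#B * √(#B)) * √√Eₘ[B] * √(Real.logb 2 #B + 1) :=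
    hK.trans_le (sqrt_mul_log_le #B (Real.sqrt_nonneg _))
  have h_levels := sum_sqrt_two_pow_mul_card_dyadicLevel_le hB₀
  calc (sumProdCollisions B A : ℝ) - (#B : ℝ) ^ 4 * (#A : ℝ) ^ 2 / p
      = ∑ j ∈ range (Nat.log 2 #B + 1),
          ∑ d, (subRep A d : ℝ) * prodDiscrepancy B (dyadicLevel B j) d := by
        rw [← sumProdCollisions_sub_eq_sum_dyadicLevel hB₀ A, ZMod.card]
    _ ≤ ∑ j ∈ range (Nat.log 2 #B + 1), √E[A] * (K * √(2 ^ j * #(dyadicLevel B j))) :=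
        sum_le_sum fun j _ ↦ hK ▸ sum_subRep_mul_prodDiscrepancy_dyadicLevel_le hB₀ A j
    _ = √E[A] * (K * ∑ j ∈ range (Nat.log 2 #B + 1), √(2 ^ j * #(dyadicLevel B j))) := by
        rw [mul_sum, mul_sum]
    _ ≤ √E[A] * ((1400 * (#B * √(#B)) * √√Eₘ[B] * √(Real.logb 2 #B + 1)) *
          (√(Real.logb 2 #B + 1) * #B)) := by
        gcongr
    _ = 1400 * ((#B : ℝ) ^ 2 * √(#B)) * √E[A] * √√Eₘ[B] * √(Real.logb 2 #B + 1) ^ 2 := by ring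
    _ = 1400 * ((#B : ℝ) ^ 2 * √(#B)) * √E[A] * √√Eₘ[B] * (Real.logb 2 #B + 1) := by
        rw [Real.sq_sqrt h_logb]

end DyadicDecomposition

section ZeroRemoval

variable {F : Type*} [Field F] [DecidableEq F]

lemma card_filter_mul_eq_zero_le (A : Finset F) :
    #{x ∈ A ×ˢ A | x.1 * x.2 = 0} ≤ 2 * #A := by
  have h_sub : ({x ∈ A ×ˢ A | x.1 * x.2 = 0} : Finset (F × F)) ⊆ {0} ×ˢ A ∪ A ×ˢ {0} := by
    intro x hx
    simp only [mem_filter, mem_product, mul_eq_zero] at hx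
    simp only [mem_union, mem_product, mem_singleton]
    tauto
  calc #{x ∈ A ×ˢ A | x.1 * x.2 = 0} ≤ #({0} ×ˢ A) + #(A ×ˢ {0}) :=
        (card_le_card h_sub).trans (card_union_le _ _)
    _ = 2 * #A := by rw [card_product, card_product, card_singleton]; ring

/- The coordinate `z.1.2.2` is determined by the other five. -/
lemma card_collisions_mul_eq_zero_le (A : Finset F) :
    #{z ∈ (A ×ˢ A ×ˢ A) ×ˢ (A ×ˢ A ×ˢ A) |
      z.1.1 * z.1.2.1 + z.1.2.2 = z.2.1 * z.2.2.1 + z.2.2.2 ∧ z.1.1 * z.1.2.1 = 0} ≤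
      2 * #A ^ 4 := by
  calc _ ≤ #(({x ∈ A ×ˢ A | x.1 * x.2 = 0} : Finset (F × F)) ×ˢ A ×ˢ A ×ˢ A) := by
        refine card_le_card_of_injOn (fun z ↦ ((z.1.1, z.1.2.1), z.2)) ?_ ?_
        · intro z hz
          simp only [coe_filter, mem_product, Set.mem_ofPred_eq] at hz
          simp only [mem_coe, mem_product, mem_filter]
          tauto
        · rintro ⟨⟨a, b, c⟩, w⟩ hz ⟨⟨a', b', c'⟩, w'⟩ hz' h_eq
          simp only [coe_filter, Set.mem_ofPred_eq] at hz hz'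
          simp only [Prod.mk.injEq] at h_eq ⊢
          obtain ⟨⟨rfl, rfl⟩, rfl⟩ := h_eq
          exact ⟨⟨rfl, rfl, add_left_cancel (hz.2.1.trans hz'.2.1.symm)⟩, rfl⟩
    _ ≤ 2 * #A * (#A * (#A * #A)) := by
        rw [card_product, card_product, card_product]
        gcongr
        exact card_filter_mul_eq_zero_le A
    _ = 2 * #A ^ 4 := by ring

lemma sumProdCollisions_le_erase_zero_add (A : Finset F) :
    sumProdCollisions A A ≤ sumProdCollisions (A.erase 0) A + 4 * #A ^ 4 := by
  let leftZero : Finset ((F × F × F) × F × F × F) := {z ∈ (A ×ˢ A ×ˢ A) ×ˢ (A ×ˢ A ×ˢ A) |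
    z.1.1 * z.1.2.1 + z.1.2.2 = z.2.1 * z.2.2.1 + z.2.2.2 ∧ z.1.1 * z.1.2.1 = 0}
  have h_sub : ({z ∈ (A ×ˢ A ×ˢ A) ×ˢ (A ×ˢ A ×ˢ A) |
      z.1.1 * z.1.2.1 + z.1.2.2 = z.2.1 * z.2.2.1 + z.2.2.2} : Finset _) ⊆
      {z ∈ (A.erase 0 ×ˢ A.erase 0 ×ˢ A) ×ˢ (A.erase 0 ×ˢ A.erase 0 ×ˢ A) |
        z.1.1 * z.1.2.1 + z.1.2.2 = z.2.1 * z.2.2.1 + z.2.2.2} ∪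
      (leftZero ∪ leftZero.image Prod.swap) := by
    rintro ⟨⟨a, b, c⟩, a', b', c'⟩ hz
    simp only [mem_filter, mem_product] at hz
    simp only [leftZero, mem_union, mem_image, mem_filter, mem_product, mem_erase, mul_eq_zero]
    by_cases h_left : a = 0 ∨ b = 0
    · exact .inr (.inl ⟨hz.1, hz.2, h_left⟩)
    by_cases h_right : a' = 0 ∨ b' = 0
    · exact .inr (.inr ⟨((a', b', c'), a, b, c), ⟨hz.1.symm, hz.2.symm, h_right⟩, rfl⟩)
    · left
      tauto
  have h_left := card_collisions_mul_eq_zero_le A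
  calc sumProdCollisions A A
      ≤ sumProdCollisions (A.erase 0) A + (#leftZero + #(leftZero.image Prod.swap)) :=
        (card_le_card h_sub).trans <| (card_union_le _ _).trans <|
          Nat.add_le_add_left (card_union_le _ _) _
    _ ≤ sumProdCollisions (A.erase 0) A + (2 * #A ^ 4 + 2 * #A ^ 4) := by
        gcongr
        exact card_image_le.trans h_left
    _ = sumProdCollisions (A.erase 0) A + 4 * #A ^ 4 := by ring

end ZeroRemoval

section MainBound

open scoped Combinatorics.Additive

lemma card_pow_four_le_energies {F : Type*} [Field F] [DecidableEq F] (A : Finset F) :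
    (#A : ℝ) ^ 4 ≤ (#A : ℝ) ^ 2 * √(#A) * √E[A] * √√Eₘ[A] := by
  have h_add : (#A : ℝ) ≤ √E[A] := Real.le_sqrt_of_sq_le (by exact_mod_cast le_addEnergy_self)
  have h_mul : (#A : ℝ) ≤ √Eₘ[A] := Real.le_sqrt_of_sq_le (by exact_mod_cast le_mulEnergy_self)
  calc (#A : ℝ) ^ 4 = (#A : ℝ) ^ 3 * √(#A) ^ 2 := by rw [Real.sq_sqrt (by positivity)]; ring
    _ = (#A : ℝ) ^ 2 * √(#A) * #A * √(#A) := by ring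
    _ ≤ (#A : ℝ) ^ 2 * √(#A) * √E[A] * √√Eₘ[A] := by gcongr

theorem sumProdCollisions_self_sub_le {p : ℕ} [Fact p.Prime] {A : Finset (ZMod p)}
    (hA : 2 ≤ #A) :
    (sumProdCollisions A A : ℝ) - (#A : ℝ) ^ 6 / p ≤
      2804 * ((#A : ℝ) ^ 2 * √(#A)) * √E[A] * √√Eₘ[A] * Real.logb 2 #A := by
  have h_erase := sumProdCollisions_sub_le (notMem_erase 0 A) A
  have h_zero : (sumProdCollisions A A : ℝ) ≤ sumProdCollisions (A.erase 0) A + 4 * (#A : ℝ) ^ 4 :=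
    by exact_mod_cast sumProdCollisions_le_erase_zero_add A
  have h_card : (#(A.erase 0) : ℝ) ≤ #A := by exact_mod_cast card_erase_le
  have h_card_erase : (1 : ℝ) ≤ #(A.erase 0) := by
    exact_mod_cast (Nat.le_sub_one_of_lt hA).trans pred_card_le_card_erase
  have h_energy : (Eₘ[A.erase 0] : ℝ) ≤ Eₘ[A] := by
    exact_mod_cast mulEnergy_mono (erase_subset 0 A) (erase_subset 0 A)
  have h_logb : 1 ≤ Real.logb 2 #A := by
    rw [Real.le_logb_iff_rpow_le one_lt_two (by positivity), Real.rpow_one]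
    exact_mod_cast hA
  have h_logb_erase : Real.logb 2 #(A.erase 0) + 1 ≤ 2 * Real.logb 2 #A := by
    linarith [Real.logb_le_logb_of_le one_lt_two (zero_lt_one.trans_le h_card_erase) h_card]
  have h_mean : (#(A.erase 0) : ℝ) ^ 4 * (#A : ℝ) ^ 2 / p ≤ (#A : ℝ) ^ 6 / p := by
    rw [show (#A : ℝ) ^ 6 = (#A : ℝ) ^ 4 * (#A : ℝ) ^ 2 by ring]
    gcongr
  have h_pow_four := card_pow_four_le_energies A
  calc (sumProdCollisions A A : ℝ) - (#A : ℝ) ^ 6 / p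
      ≤ 1400 * ((#(A.erase 0) : ℝ) ^ 2 * √(#(A.erase 0))) * √E[A] * √√Eₘ[A.erase 0] *
          (Real.logb 2 #(A.erase 0) + 1) + 4 * (#A : ℝ) ^ 4 := by linarith
    _ ≤ 1400 * ((#A : ℝ) ^ 2 * √(#A)) * √E[A] * √√Eₘ[A] * (2 * Real.logb 2 #A) +
          4 * ((#A : ℝ) ^ 2 * √(#A) * √E[A] * √√Eₘ[A] * Real.logb 2 #A) := by
        gcongr
        · linarith [Real.logb_nonneg one_lt_two h_card_erase]
        · exact h_pow_four.trans (le_mul_of_one_le_right (by positivity) h_logb)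
    _ = 2804 * ((#A : ℝ) ^ 2 * √(#A)) * √E[A] * √√Eₘ[A] * Real.logb 2 #A := by ring

lemma addEnergy_eq_finset_addEnergy {p : ℕ} (A : Finset (ZMod p)) :
    _root_.addEnergy p A = E[A] :=
  (addEnergy_eq_card_filter A A).symm

lemma mulEnergy_eq_finset_mulEnergy {p : ℕ} (A : Finset (ZMod p)) :
    _root_.mulEnergy p A = Eₘ[A] :=
  (mulEnergy_eq_card_filter A A).symm

end MainBound

end EnergyIncidence

theorem stmt8 :
    ∃ C : ℝ,
      ∀ (p : ℕ), p.Prime → Odd p →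
        ∀ A : Finset (ZMod p), 2 ≤ A.card →
          (Nprime p A : ℝ) - (A.card : ℝ) ^ 6 / p ≤
            C * (A.card : ℝ) ^ ((5 : ℝ) / 2) * (addEnergy p A : ℝ) ^ ((1 : ℝ) / 2) *
              (mulEnergy p A : ℝ) ^ ((1 : ℝ) / 4) * Real.logb 2 A.card := by
  refine ⟨2804, fun p hp _ A hA ↦ ?_⟩
  have : Fact p.Prime := ⟨hp⟩
  have h_card : (0 : ℝ) < #A := Nat.cast_pos.mpr (zero_lt_two.trans_le hA)
  have h_card_rpow : (#A : ℝ) ^ ((5 : ℝ) / 2) = (#A : ℝ) ^ 2 * √(#A) := by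
    rw [Real.sqrt_eq_rpow, ← Real.rpow_natCast, ← Real.rpow_add h_card]
    norm_num
  have h_add_rpow : (_root_.addEnergy p A : ℝ) ^ ((1 : ℝ) / 2) = √(_root_.addEnergy p A) :=
    (Real.sqrt_eq_rpow _).symm
  have h_mul_rpow : (_root_.mulEnergy p A : ℝ) ^ ((1 : ℝ) / 4) = √√(_root_.mulEnergy p A) := by
    rw [Real.sqrt_eq_rpow, Real.sqrt_eq_rpow, ← Real.rpow_mul (Nat.cast_nonneg _)]
    norm_num
  rw [h_card_rpow, h_add_rpow, h_mul_rpow, EnergyIncidence.addEnergy_eq_finset_addEnergy,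
    EnergyIncidence.mulEnergy_eq_finset_mulEnergy]
  exact EnergyIncidence.sumProdCollisions_self_sub_le hA
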